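/- arXiv:2506.08926 — 4 statements merged into one kernel-verified Lean document; each statement's English description precedes it below -/
import Mathlib

section
/- For every positive integer r there exists a positive integer k = k(r) such that the following holds: if G is a finite simple graph such that for every nonempty subset A ⊆ V(G) the number of distinct sets of the form N(v) ∩ A with v ∈ V(G) is at most r·|A|, then G admits a (not necessarily proper) vertex coloring with k colors such that every vertex with at least one neighbor has some color appearing an odd number of times on its open neighborhood; that is, χ_io(G) ≤ k. -/
/-- `G` has neighborhood complexity at most `r * m`: for every nonempty subset `A` of the
vertex set, the number of distinct sets of the form `N(v) ∩ A` is at most `r * |A|`. -/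
def NbhdComplexityLinear {V : Type} [Fintype V] [DecidableEq V]
    (G : SimpleGraph V) [DecidableRel G.Adj] (r : ℕ) : Prop :=
  ∀ A : Finset V, A.Nonempty →
    (Finset.univ.image (fun v => G.neighborFinset v ∩ A)).card ≤ r * A.card

/-!
Label the vertices by elements of an elementary abelian `2`-group `W` so that the labels on every
nonempty neighborhood have nonzero sum. Then some label occurs an odd number of times on it, because
an even number of equal labels sums to zero.

More generally, one labels a vertex set `A` so that the sum over each nonempty `N(v) ∩ A` is
nonzero, by induction on `#A`. Only one vertex `v` for each of the at most `r * #A` traces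
`N(v) ∩ A` matters. Haussler's packing argument (edges of one-inclusion graphs, averaged over
random samples of these vertices) provides two vertices `x ≠ y` of `A` whose neighborhoods differ
in at most `16 * r ^ 3` of them. Label `A \ {y}` by induction, give `y` the label `0`, and then add
to both labels a value `z` which avoids the at most `16 * r ^ 3` elements that would create a zero
sum.
-/

section OneInclusionGraph

open Finset

variable {α : Type*} [DecidableEq α]

lemma vcDim_image_erase_le (𝒜 : Finset (Finset α)) (a : α) :
    (𝒜.image (·.erase a)).vcDim ≤ 𝒜.vcDim := by
  refine Finset.sup_le fun s hs ↦ Shatters.card_le_vcDim fun t ht ↦ ?_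
  rw [mem_shatterer] at hs
  have ha : a ∉ s := by
    obtain ⟨u, hu, hsu⟩ := hs.exists_superset
    obtain ⟨v, -, rfl⟩ := mem_image.1 hu
    exact fun has ↦ notMem_erase a v (hsu has)
  obtain ⟨u, hu, hsu⟩ := hs ht
  obtain ⟨v, hv, rfl⟩ := mem_image.1 hu
  exact ⟨v, hv, by rwa [inter_erase, erase_eq_of_notMem (by simp [ha])] at hsu⟩

lemma shatters_insert_of_shatters_memberSubfamily_inter {𝒜 : Finset (Finset α)} {a : α}
    {s : Finset α} (hs : (𝒜.memberSubfamily a ∩ 𝒜.nonMemberSubfamily a).Shatters s) :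
    𝒜.Shatters (insert a s) := by
  intro t ht
  obtain ⟨u, hu, hsu⟩ := hs (subset_insert_iff.1 ht)
  simp only [mem_inter, mem_memberSubfamily, mem_nonMemberSubfamily] at hu
  by_cases hat : a ∈ t
  · exact ⟨insert a u, hu.1.1, by rw [← insert_inter_distrib, hsu, insert_erase hat]⟩
  · exact ⟨u, hu.2.1, by rw [insert_inter_of_notMem hu.1.2, hsu, erase_eq_of_notMem hat]⟩

lemma vcDim_memberSubfamily_inter_nonMemberSubfamily_lt {𝒜 : Finset (Finset α)} {a : α}
    (h : (𝒜.memberSubfamily a ∩ 𝒜.nonMemberSubfamily a).Nonempty) :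
    (𝒜.memberSubfamily a ∩ 𝒜.nonMemberSubfamily a).vcDim < 𝒜.vcDim := by
  obtain ⟨s, hs, hcard⟩ := exists_mem_eq_sup _ ⟨∅, mem_shatterer.2 (shatters_empty.2 h)⟩ card
  rw [mem_shatterer] at hs
  have ha : a ∉ s := by
    obtain ⟨u, hu, hsu⟩ := hs.exists_superset
    exact fun has ↦ (mem_memberSubfamily.1 (mem_inter.1 hu).1).2 (hsu has)
  calc _ = #s := hcard
    _ < #(insert a s) := by rw [card_insert_of_notMem ha]; exact Nat.lt_succ_self _
    _ ≤ 𝒜.vcDim := (shatters_insert_of_shatters_memberSubfamily_inter hs).card_le_vcDim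

lemma vcDim_memberSubfamily_inter_mul_sum_add_sum_le {𝒜 ℬ : Finset (Finset α)} {a : α}
    {w : Finset α → ℕ}
    (hw : ∀ S ∈ ℬ, w S ≠ 0 → S ∈ 𝒜.memberSubfamily a ∩ 𝒜.nonMemberSubfamily a) :
    (𝒜.memberSubfamily a ∩ 𝒜.nonMemberSubfamily a).vcDim * ∑ S ∈ ℬ, w S + ∑ S ∈ ℬ, w S ≤
      𝒜.vcDim * ∑ S ∈ ℬ, w S := by
  rw [← Nat.succ_mul]
  by_cases h : ∑ S ∈ ℬ, w S = 0
  · simp only [h, mul_zero, le_refl]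
  · obtain ⟨S, hS, hne⟩ := exists_ne_zero_of_sum_ne_zero h
    exact Nat.mul_le_mul_right _
      (vcDim_memberSubfamily_inter_nonMemberSubfamily_lt ⟨S, hw S hS hne⟩)

/-- The total weight of the edges in direction `a` of the one-inclusion graph (the hypercube) on the
subsets of `U`, when the edge joining `S` to `insert a S` weighs as much as the lighter of its two
endpoints. Intended for `a ∈ U`. -/
def edgeWeight (w : Finset α → ℕ) (U : Finset α) (a : α) : ℕ :=
  ∑ S ∈ (U.erase a).powerset, min (w S) (w (insert a S))

lemma edgeWeight_insert_self {U : Finset α} {a : α} (ha : a ∉ U) (w : Finset α → ℕ) :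
    edgeWeight w (insert a U) a = ∑ S ∈ U.powerset, min (w S) (w (insert a S)) := by
  rw [edgeWeight, erase_insert ha]

lemma edgeWeight_insert {U : Finset α} {a b : α} (ha : a ∉ U) (hb : b ∈ U) (w : Finset α → ℕ) :
    edgeWeight w (insert a U) b = edgeWeight w U b + edgeWeight (fun S ↦ w (insert a S)) U b := by
  have hab : a ≠ b := fun h ↦ ha (h ▸ hb)
  simp only [edgeWeight, erase_insert_of_ne hab, insert_comm b a,
    sum_powerset_insert (fun h ↦ ha (mem_of_mem_erase h))]

lemma edgeWeight_add_le (w₀ w₁ : Finset α → ℕ) (U : Finset α) (a : α) :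
    edgeWeight w₀ U a + edgeWeight w₁ U a ≤
      edgeWeight (fun S ↦ max (w₀ S) (w₁ S)) U a + edgeWeight (fun S ↦ min (w₀ S) (w₁ S)) U a := by
  simp only [edgeWeight, ← sum_add_distrib]
  exact sum_le_sum fun S _ ↦ by omega

lemma sum_edgeWeight_insert_le {U : Finset α} {a : α} (ha : a ∉ U) (w : Finset α → ℕ) :
    ∑ b ∈ insert a U, edgeWeight w (insert a U) b ≤
      ∑ b ∈ U, edgeWeight (fun S ↦ max (w S) (w (insert a S))) U b +
        (∑ b ∈ U, edgeWeight (fun S ↦ min (w S) (w (insert a S))) U b +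
          ∑ S ∈ U.powerset, min (w S) (w (insert a S))) := by
  have hsum := sum_le_sum fun b (_ : b ∈ U) ↦ edgeWeight_add_le w (fun S ↦ w (insert a S)) U b
  rw [sum_add_distrib, sum_add_distrib] at hsum
  rw [sum_insert ha, edgeWeight_insert_self ha, sum_congr rfl fun b hb ↦ edgeWeight_insert ha hb w,
    sum_add_distrib]
  linarith

/-- The weighted form of Haussler's bound on the edge density of one-inclusion graphs. -/
theorem sum_edgeWeight_le (U : Finset α) (𝒜 : Finset (Finset α)) (w : Finset α → ℕ)
    (hw : ∀ S ⊆ U, w S ≠ 0 → S ∈ 𝒜) :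
    ∑ a ∈ U, edgeWeight w U a ≤ 𝒜.vcDim * ∑ S ∈ U.powerset, w S := by
  -- Project along `a`: the maximum of the two fibres has dimension at most that of `𝒜`, while their
  -- minimum, which is the weight of the edges in direction `a`, has strictly smaller dimension.
  induction U using Finset.induction_on generalizing 𝒜 w with
  | empty => simp
  | insert a U ha ih =>
    have hmem {S : Finset α} (hS : S ⊆ U) (h : w S ≠ 0) : S ∈ 𝒜.nonMemberSubfamily a :=
      mem_nonMemberSubfamily.2 ⟨hw S (hS.trans (subset_insert a U)) h, fun haS ↦ ha (hS haS)⟩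
    have hmem₁ {S : Finset α} (hS : S ⊆ U) (h : w (insert a S) ≠ 0) : S ∈ 𝒜.memberSubfamily a :=
      mem_memberSubfamily.2 ⟨hw _ (insert_subset_insert a hS) h, fun haS ↦ ha (hS haS)⟩
    have hmax := calc
      ∑ b ∈ U, edgeWeight (fun S ↦ max (w S) (w (insert a S))) U b
          ≤ (𝒜.image (·.erase a)).vcDim * ∑ S ∈ U.powerset, max (w S) (w (insert a S)) := by
        refine ih _ _ fun S hS h ↦ ?_
        rw [← memberSubfamily_union_nonMemberSubfamily, mem_union]
        by_cases h₁ : w (insert a S) = 0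
        · exact .inr (hmem hS (by omega))
        · exact .inl (hmem₁ hS h₁)
      _ ≤ 𝒜.vcDim * ∑ S ∈ U.powerset, max (w S) (w (insert a S)) :=
        Nat.mul_le_mul_right _ (vcDim_image_erase_le 𝒜 a)
    have hinter : ∀ S ⊆ U, min (w S) (w (insert a S)) ≠ 0 →
        S ∈ 𝒜.memberSubfamily a ∩ 𝒜.nonMemberSubfamily a := fun S hS h ↦
      mem_inter.2 ⟨hmem₁ hS (by omega), hmem hS (by omega)⟩
    have hmin := (add_le_add_left (ih _ _ hinter) _).trans
      (vcDim_memberSubfamily_inter_mul_sum_add_sum_le fun S hS ↦ hinter S (mem_powerset.1 hS))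
    calc ∑ b ∈ insert a U, edgeWeight w (insert a U) b
        ≤ 𝒜.vcDim * ∑ S ∈ U.powerset, max (w S) (w (insert a S)) +
            𝒜.vcDim * ∑ S ∈ U.powerset, min (w S) (w (insert a S)) :=
          (sum_edgeWeight_insert_le ha w).trans (add_le_add hmax hmin)
      _ = 𝒜.vcDim * ∑ S ∈ (insert a U).powerset, w S := by
          rw [← mul_add, ← sum_add_distrib, sum_powerset_insert ha, ← sum_add_distrib]
          simp only [max_add_min]

end OneInclusionGraph

section Packing

open Finset
open scoped symmDiff

variable {α β : Type*} [DecidableEq β]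

/-- The distinct sets `N x ∩ B` with `x ∈ A`: the traces on `B` of the sets indexed by `A`. -/
def traces (N : α → Finset β) (A : Finset α) (B : Finset β) : Finset (Finset β) :=
  A.image (N · ∩ B)

/-- The elements of `A` whose set has trace `T` on `B`. -/
def traceClass (N : α → Finset β) (A : Finset α) (B T : Finset β) : Finset α :=
  {x ∈ A | N x ∩ B = T}

variable {N : α → Finset β} {A : Finset α} {B R T U : Finset β}

lemma mem_traces : T ∈ traces N A B ↔ ∃ x ∈ A, N x ∩ B = T :=
  mem_image

lemma mem_traceClass {x : α} : x ∈ traceClass N A B T ↔ x ∈ A ∧ N x ∩ B = T :=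
  mem_filter

lemma traces_subset_powerset : traces N A B ⊆ B.powerset :=
  image_subset_iff.2 fun _ _ ↦ mem_powerset.2 inter_subset_right

lemma powerset_subset_traces_of_shatters {s : Finset β} (hs : (traces N A U).Shatters s) :
    s ⊆ U ∧ s.powerset ⊆ traces N A s := by
  have hsU : s ⊆ U := by
    obtain ⟨u, hu, hsu⟩ := hs.exists_superset
    exact hsu.trans (mem_powerset.1 (traces_subset_powerset hu))
  refine ⟨hsU, fun t ht ↦ ?_⟩
  obtain ⟨u, hu, rfl⟩ := hs (mem_powerset.1 ht)
  obtain ⟨x, hx, rfl⟩ := mem_traces.1 hu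
  exact mem_traces.2 ⟨x, hx, by rw [inter_left_comm, inter_eq_left.2 hsU]⟩

lemma le_two_mul_of_two_pow_le_mul {n r : ℕ} (h : 2 ^ n ≤ r * n) : n ≤ 2 * r := by
  rcases Nat.eq_zero_or_pos n with rfl | hn
  · exact Nat.zero_le _
  by_contra! hlt
  have hchoose : r * n ≤ n.choose 2 := by
    rw [Nat.choose_two_right, Nat.le_div_iff_mul_le two_pos]
    calc r * n * 2 = n * (2 * r) := by ring
      _ ≤ n * (n - 1) := Nat.mul_le_mul_left n (by omega)
  exact (h.trans hchoose).not_gt (Nat.choose_lt_two_pow n 2 hn)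

lemma vcDim_traces_le {r : ℕ} (h : ∀ B ⊆ U, B.Nonempty → #(traces N A B) ≤ r * #B) :
    (traces N A U).vcDim ≤ 2 * r := by
  refine Finset.sup_le fun s hs ↦ ?_
  obtain ⟨hsU, hsub⟩ := powerset_subset_traces_of_shatters (mem_shatterer.1 hs)
  rcases s.eq_empty_or_nonempty with rfl | hne
  · exact Nat.zero_le _
  · refine le_two_mul_of_two_pow_le_mul ?_
    calc 2 ^ #s = #s.powerset := (card_powerset s).symm
      _ ≤ #(traces N A s) := card_le_card hsub
      _ ≤ r * #s := h s hsU hne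

lemma sum_card_traceClass : ∑ T ∈ traces N A B, #(traceClass N A B T) = #A :=
  (card_eq_sum_card_image (N · ∩ B) A).symm

lemma sum_powerset_card_traceClass : ∑ T ∈ B.powerset, #(traceClass N A B T) = #A :=
  (card_eq_sum_card_fiberwise fun _ _ ↦ mem_coe.2 (mem_powerset.2 inter_subset_right)).symm

lemma sum_edgeWeight_card_traceClass_le :
    ∑ y ∈ U, edgeWeight (fun T ↦ #(traceClass N A U T)) U y ≤ (traces N A U).vcDim * #A := by
  rw [← sum_powerset_card_traceClass (N := N) (A := A) (B := U)]
  refine sum_edgeWeight_le U _ _ fun T _ hT ↦ ?_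
  obtain ⟨x, hx⟩ := card_ne_zero.1 hT
  exact mem_traces.2 ⟨x, mem_traceClass.1 hx⟩

lemma traceClass_insert {y : β} (hy : y ∉ B) (hT : T ⊆ B) :
    traceClass N A (insert y B) T = {x ∈ traceClass N A B T | y ∉ N x} := by
  ext x
  simp only [traceClass, mem_filter, and_assoc]
  refine and_congr_right fun _ ↦ ?_
  by_cases hyx : y ∈ N x
  · simp only [hyx, not_true_eq_false, and_false, iff_false]
    exact fun h ↦ hy (hT (h ▸ mem_inter.2 ⟨hyx, mem_insert_self y B⟩))
  · simp only [hyx, not_false_eq_true, and_true, inter_insert_of_notMem]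

lemma traceClass_insert_insert {y : β} (hy : y ∉ B) (hT : T ⊆ B) :
    traceClass N A (insert y B) (insert y T) = {x ∈ traceClass N A B T | y ∈ N x} := by
  ext x
  simp only [traceClass, mem_filter, and_assoc]
  refine and_congr_right fun _ ↦ ?_
  by_cases hyx : y ∈ N x
  · have hyT : y ∉ T := fun h ↦ hy (hT h)
    have hyNB : y ∉ N x ∩ B := fun h ↦ hy (mem_inter.1 h).2
    simp only [hyx, and_true, inter_insert_of_mem]
    exact ⟨fun h ↦ by rw [← erase_insert hyNB, h, erase_insert hyT], fun h ↦ by rw [h]⟩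
  · simp only [hyx, and_false, iff_false, not_false_eq_true, inter_insert_of_notMem]
    exact fun h ↦ hyx (mem_inter.1 (h ▸ mem_insert_self y T)).1

lemma sum_min_le_edgeWeight_card_traceClass {y : β} (hy : y ∉ B) :
    ∑ T ∈ traces N A B, min #{x ∈ traceClass N A B T | y ∉ N x}
        #{x ∈ traceClass N A B T | y ∈ N x} ≤
      edgeWeight (fun T ↦ #(traceClass N A (insert y B) T)) (insert y B) y := by
  rw [edgeWeight_insert_self hy]
  calc _ = ∑ T ∈ traces N A B, min #(traceClass N A (insert y B) T)
        #(traceClass N A (insert y B) (insert y T)) := sum_congr rfl fun T hT ↦ by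
        have hTB := mem_powerset.1 (traces_subset_powerset hT)
        rw [traceClass_insert hy hTB, traceClass_insert_insert hy hTB]
    _ ≤ _ := sum_le_sum_of_subset traces_subset_powerset

lemma card_filter_mem_symmDiff (N : α → Finset β) (P : Finset α) (y : β) :
    #{p ∈ P ×ˢ P | y ∈ N p.1 ∆ N p.2} = 2 * (#{x ∈ P | y ∉ N x} * #{x ∈ P | y ∈ N x}) := by
  have hsplit : {p ∈ P ×ˢ P | y ∈ N p.1 ∆ N p.2} =
      ({x ∈ P | y ∈ N x} ×ˢ {x ∈ P | y ∉ N x}).disjUnion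
        ({x ∈ P | y ∉ N x} ×ˢ {x ∈ P | y ∈ N x})
        (disjoint_product.2 (.inl (disjoint_filter_filter_not P P _))) := by
    ext p
    simp only [mem_filter, mem_product, mem_symmDiff, mem_disjUnion]
    tauto
  rw [hsplit, card_disjUnion, card_product, card_product]
  ring

lemma sum_card_symmDiff_inter (N : α → Finset β) (P : Finset α) (Q : Finset β) :
    ∑ p ∈ P ×ˢ P, #((N p.1 ∆ N p.2) ∩ Q) =
      2 * ∑ y ∈ Q, #{x ∈ P | y ∉ N x} * #{x ∈ P | y ∈ N x} := by
  calc ∑ p ∈ P ×ˢ P, #((N p.1 ∆ N p.2) ∩ Q)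
      = ∑ p ∈ P ×ˢ P, #(Q.bipartiteAbove (fun p y ↦ y ∈ N p.1 ∆ N p.2) p) := by
        simp only [bipartiteAbove, filter_mem_eq_inter, inter_comm]
    _ = ∑ y ∈ Q, #{p ∈ P ×ˢ P | y ∈ N p.1 ∆ N p.2} :=
        sum_card_bipartiteAbove_eq_sum_card_bipartiteBelow _
    _ = 2 * ∑ y ∈ Q, #{x ∈ P | y ∉ N x} * #{x ∈ P | y ∈ N x} := by
        simp only [card_filter_mem_symmDiff, mul_sum]

lemma mul_card_filter_le_min_mul_card (P : Finset α) (p : α → Prop) [DecidablePred p] :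
    #{x ∈ P | ¬p x} * #{x ∈ P | p x} ≤ min #{x ∈ P | ¬p x} #{x ∈ P | p x} * #P := by
  rw [← min_mul_max]
  exact Nat.mul_le_mul_left _ (max_le (card_filter_le _ _) (card_filter_le _ _))

lemma mul_card_le_of_pairwise_le_card_symmDiff {P : Finset α} {Q : Finset β} {δ : ℕ}
    (hP : (P : Set α).Pairwise fun x x' ↦ δ ≤ #((N x ∆ N x') ∩ Q)) :
    δ * #P ≤ 2 * ∑ y ∈ Q, min #{x ∈ P | y ∉ N x} #{x ∈ P | y ∈ N x} + δ := by
  rcases P.eq_empty_or_nonempty with rfl | hne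
  · simp
  have hpairs : #P * ((#P - 1) * δ) ≤
      #P * (2 * ∑ y ∈ Q, min #{x ∈ P | y ∉ N x} #{x ∈ P | y ∈ N x}) := by
    calc #P * ((#P - 1) * δ) = #P.offDiag • δ := by
          rw [offDiag_card, smul_eq_mul, ← mul_assoc, Nat.mul_sub_one]
      _ ≤ ∑ p ∈ P.offDiag, #((N p.1 ∆ N p.2) ∩ Q) := card_nsmul_le_sum _ _ _ fun p hp ↦ by
          obtain ⟨hp₁, hp₂, hne⟩ := mem_offDiag.1 hp
          exact hP hp₁ hp₂ hne
      _ ≤ ∑ p ∈ P ×ˢ P, #((N p.1 ∆ N p.2) ∩ Q) := sum_le_sum_of_subset fun p hp ↦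
          have ⟨hp₁, hp₂, _⟩ := mem_offDiag.1 hp
          mem_product.2 ⟨hp₁, hp₂⟩
      _ = 2 * ∑ y ∈ Q, #{x ∈ P | y ∉ N x} * #{x ∈ P | y ∈ N x} := sum_card_symmDiff_inter N P Q
      _ ≤ 2 * ∑ y ∈ Q, min #{x ∈ P | y ∉ N x} #{x ∈ P | y ∈ N x} * #P :=
          Nat.mul_le_mul_left 2 (sum_le_sum fun y _ ↦ mul_card_filter_le_min_mul_card P (y ∈ N ·))
      _ = _ := by rw [← sum_mul]; ring
  have hcancel := Nat.le_of_mul_le_mul_left hpairs hne.card_pos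
  calc δ * #P = (#P - 1) * δ + δ := by
        rw [← Nat.succ_mul, Nat.succ_eq_add_one, Nat.sub_add_cancel hne.card_pos, mul_comm]
    _ ≤ _ := by gcongr

lemma symmDiff_inter_subset_sdiff_of_inter_eq {s t : Finset β} (h : s ∩ B = t ∩ B) :
    (s ∆ t) ∩ R ⊆ (s ∆ t) ∩ (R \ B) := by
  intro y hy
  have hiff := Finset.ext_iff.1 h y
  simp only [mem_inter, mem_symmDiff, mem_sdiff] at hy hiff ⊢
  tauto

lemma mul_card_le_sum_edgeWeight {δ : ℕ} (B : Finset β)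
    (hA : (A : Set α).Pairwise fun x x' ↦ δ ≤ #((N x ∆ N x') ∩ R)) :
    δ * #A ≤
      2 * ∑ y ∈ R \ B, edgeWeight (fun T ↦ #(traceClass N A (insert y B) T)) (insert y B) y +
        δ * #(traces N A B) := by
  have hclass (T : Finset β) : (traceClass N A B T : Set α).Pairwise
      fun x x' ↦ δ ≤ #((N x ∆ N x') ∩ (R \ B)) := by
    intro x hx x' hx' hne
    obtain ⟨hxA, hxT⟩ := mem_traceClass.1 hx
    obtain ⟨hxA', hxT'⟩ := mem_traceClass.1 hx'
    exact (hA hxA hxA' hne).trans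
      (card_le_card (symmDiff_inter_subset_sdiff_of_inter_eq (hxT.trans hxT'.symm)))
  calc δ * #A = ∑ T ∈ traces N A B, δ * #(traceClass N A B T) := by
        rw [← mul_sum, sum_card_traceClass]
    _ ≤ ∑ T ∈ traces N A B, (2 * ∑ y ∈ R \ B, min #{x ∈ traceClass N A B T | y ∉ N x}
          #{x ∈ traceClass N A B T | y ∈ N x} + δ) :=
        sum_le_sum fun T _ ↦ mul_card_le_of_pairwise_le_card_symmDiff (hclass T)
    _ = 2 * ∑ y ∈ R \ B, ∑ T ∈ traces N A B, min #{x ∈ traceClass N A B T | y ∉ N x}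
          #{x ∈ traceClass N A B T | y ∈ N x} + δ * #(traces N A B) := by
        rw [sum_add_distrib, ← mul_sum, sum_comm, sum_const, smul_eq_mul, mul_comm δ]
    _ ≤ _ := by
        gcongr with y hy
        exact sum_min_le_edgeWeight_card_traceClass (mem_sdiff.1 hy).2

lemma sum_powersetCard_sum_sdiff {M : Type*} [AddCommMonoid M] (R : Finset β) (s : ℕ)
    (f : Finset β → β → M) :
    ∑ B ∈ R.powersetCard s, ∑ y ∈ R \ B, f (insert y B) y =
      ∑ U ∈ R.powersetCard (s + 1), ∑ y ∈ U, f U y := by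
  rw [sum_sigma', sum_sigma']
  refine sum_bij' (fun p _ ↦ ⟨insert p.2 p.1, p.2⟩) (fun p _ ↦ ⟨p.1.erase p.2, p.2⟩) ?_ ?_ ?_ ?_
    fun _ _ ↦ rfl
  all_goals rintro ⟨S, y⟩ h
  all_goals simp only [mem_sigma, mem_powersetCard, mem_sdiff] at h ⊢
  · exact ⟨⟨insert_subset h.2.1 h.1.1, by rw [card_insert_of_notMem h.2.2, h.1.2]⟩,
      mem_insert_self _ _⟩
  · refine ⟨⟨(erase_subset _ _).trans h.1.1, ?_⟩, h.1.1 h.2, notMem_erase _ _⟩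
    rw [card_erase_of_mem h.2, h.1.2, Nat.add_sub_cancel]
  · rw [erase_insert h.2.2]
  · rw [insert_erase h.2]

/-- **Haussler's packing inequality**, by averaging over the sets `B ⊆ R` of size `s`. -/
theorem succ_mul_mul_card_le_of_pairwise_le_card_symmDiff {δ s t d : ℕ} (hs : s ≤ #R)
    (hA : (A : Set α).Pairwise fun x x' ↦ δ ≤ #((N x ∆ N x') ∩ R))
    (ht : ∀ B ⊆ R, #B = s → #(traces N A B) ≤ t)
    (hd : ∀ U ⊆ R, #U = s + 1 → (traces N A U).vcDim ≤ d) :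
    (s + 1) * (δ * #A) ≤ 2 * (d * #A) * (#R - s) + (s + 1) * (δ * t) := by
  have hsum : (#R).choose s * (δ * #A) ≤
      2 * ((#R).choose (s + 1) * (d * #A)) + (#R).choose s * (δ * t) := by
    calc (#R).choose s * (δ * #A) = ∑ _B ∈ R.powersetCard s, δ * #A := by
          rw [sum_const, card_powersetCard, smul_eq_mul]
      _ ≤ ∑ B ∈ R.powersetCard s,
            (2 * ∑ y ∈ R \ B,
              edgeWeight (fun T ↦ #(traceClass N A (insert y B) T)) (insert y B) y + δ * t) := by
          refine sum_le_sum fun B hB ↦ (mul_card_le_sum_edgeWeight B hA).trans ?_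
          obtain ⟨hBR, hcard⟩ := mem_powersetCard.1 hB
          gcongr
          exact ht B hBR hcard
      _ = 2 * ∑ U ∈ R.powersetCard (s + 1),
            ∑ y ∈ U, edgeWeight (fun T ↦ #(traceClass N A U T)) U y + (#R).choose s * (δ * t) := by
          rw [sum_add_distrib, ← mul_sum, sum_const, card_powersetCard, smul_eq_mul,
            sum_powersetCard_sum_sdiff R s fun U ↦ edgeWeight (fun T ↦ #(traceClass N A U T)) U]
      _ ≤ _ := by
          gcongr
          rw [← card_powersetCard, ← smul_eq_mul]
          refine sum_le_card_nsmul _ _ _ fun U hU ↦ ?_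
          obtain ⟨hUR, hcard⟩ := mem_powersetCard.1 hU
          exact (sum_edgeWeight_card_traceClass_le).trans
            (Nat.mul_le_mul_right _ (hd U hUR hcard))
  refine Nat.le_of_mul_le_mul_left ?_ (Nat.choose_pos hs)
  calc (#R).choose s * ((s + 1) * (δ * #A)) = (s + 1) * ((#R).choose s * (δ * #A)) := by ring
    _ ≤ (s + 1) * (2 * ((#R).choose (s + 1) * (d * #A)) + (#R).choose s * (δ * t)) := by gcongr
    _ = (#R).choose (s + 1) * (s + 1) * (2 * (d * #A)) +
          (#R).choose s * ((s + 1) * (δ * t)) := by ring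
    _ = _ := by rw [Nat.choose_succ_right_eq]; ring

lemma card_le_card_traces_of_pairwise_symmDiff_inter_nonempty
    (hA : (A : Set α).Pairwise fun x x' ↦ ((N x ∆ N x') ∩ R).Nonempty) :
    #A ≤ #(traces N A R) := by
  refine (card_image_of_injOn fun x hx x' hx' hxx' ↦ ?_).ge
  by_contra hne
  obtain ⟨y, hy⟩ := hA hx hx' hne
  simpa only [Finset.sdiff_self, inter_empty, notMem_empty] using
    symmDiff_inter_subset_sdiff_of_inter_eq hxx' hy

lemma le_sixteen_mul_pow_three_of_succ_mul_mul_le {n m r δ : ℕ} (hn : 0 < n)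
    (hr : 0 < r) (hm : m ≤ r * n)
    (h : (n / (2 * r) + 1) * (δ * n) ≤ 2 * (2 * r * n) * (m - n / (2 * r)) +
      (n / (2 * r) + 1) * (δ * (r * (n / (2 * r))))) :
    δ ≤ 16 * r ^ 3 := by
  -- For samples of size `n / (2 * r)`, the term coming from the number of traces accounts for at
  -- most half of the left-hand side.
  have hlow : 2 * (r * (n / (2 * r))) ≤ n := by
    rw [← mul_assoc]
    exact Nat.mul_div_le n (2 * r)
  have hupp : n ≤ 2 * r * (n / (2 * r) + 1) := (Nat.lt_mul_div_succ n (by omega)).le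
  set s := n / (2 * r)
  have hhalf : n * ((s + 1) * δ) ≤ n * (8 * r * m) := by
    have hclasses : (s + 1) * δ * (2 * (r * s)) ≤ (s + 1) * δ * n := Nat.mul_le_mul_left _ hlow
    have hedges : 4 * r * n * (m - s) ≤ 4 * r * n * m := Nat.mul_le_mul_left _ (Nat.sub_le m s)
    linarith
  refine Nat.le_of_mul_le_mul_left ?_ hn
  calc n * δ ≤ 2 * r * (s + 1) * δ := Nat.mul_le_mul_right δ hupp
    _ = 2 * r * ((s + 1) * δ) := by ring
    _ ≤ 2 * r * (8 * r * (r * n)) := Nat.mul_le_mul_left _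
        ((Nat.le_of_mul_le_mul_left hhalf hn).trans (Nat.mul_le_mul_left _ hm))
    _ = n * (16 * r ^ 3) := by ring

theorem exists_ne_card_symmDiff_inter_le {r : ℕ} (hA : A.Nontrivial) (hR : #R ≤ r * #A)
    (hN : ∀ B ⊆ R, B.Nonempty → #(traces N A B) ≤ r * #B) :
    ∃ x ∈ A, ∃ y ∈ A, x ≠ y ∧ #((N x ∆ N y) ∩ R) ≤ 16 * r ^ 3 := by
  by_contra! hsep
  have hlarge : 16 * r ^ 3 < #R := by
    obtain ⟨x, hx, y, hy, hxy⟩ := hA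
    exact (hsep x hx y hy hxy).trans_le (card_le_card inter_subset_right)
  have hr : 0 < r := Nat.pos_of_mul_pos_right (Nat.zero_lt_of_lt (hlarge.trans_le hR))
  have hs_pos : 0 < #A / (2 * r) := by
    refine Nat.div_pos ?_ (by omega)
    refine Nat.le_of_mul_le_mul_left ?_ hr
    calc r * (2 * r) = 2 * r ^ 2 := by ring
      _ ≤ 16 * r ^ 3 := Nat.mul_le_mul (by norm_num) (Nat.pow_le_pow_right hr (by norm_num))
      _ ≤ r * #A := (hlarge.trans_le hR).le
  have hs_le : #A / (2 * r) ≤ #R := by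
    refine Nat.div_le_of_le_mul ?_
    calc #A ≤ #(traces N A R) :=
          card_le_card_traces_of_pairwise_symmDiff_inter_nonempty fun x hx y hy hxy ↦
            card_pos.1 (Nat.zero_lt_of_lt (hsep x hx y hy hxy))
      _ ≤ r * #R := hN R Subset.rfl (card_pos.1 (Nat.zero_lt_of_lt hlarge))
      _ ≤ 2 * r * #R := by gcongr; omega
  refine (Nat.lt_succ_self (16 * r ^ 3)).not_ge
    (le_sixteen_mul_pow_three_of_succ_mul_mul_le hA.nonempty.card_pos hr hR ?_)
  refine succ_mul_mul_card_le_of_pairwise_le_card_symmDiff hs_le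
    (fun x hx y hy hxy ↦ hsep x hx y hy hxy) (fun B hB hcard ↦ ?_)
    fun U hU _ ↦ vcDim_traces_le fun B hB ↦ hN B (hB.trans hU)
  exact hcard ▸ hN B hB (card_pos.1 (hcard ▸ hs_pos))

end Packing

section Labeling

open Finset
open scoped symmDiff

variable {ι α W : Type*}

/-- The incidence family dual to `N`: the indices of the sets that contain `x`. -/
def dualFamily [Fintype ι] [DecidableEq α] (N : ι → Finset α) (x : α) : Finset ι :=
  {i | x ∈ N i}

lemma mem_dualFamily [Fintype ι] [DecidableEq α] {N : ι → Finset α} {x : α} {i : ι} :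
    i ∈ dualFamily N x ↔ x ∈ N i :=
  mem_filter_univ i

lemma dualFamily_neighborFinset [Fintype α] [DecidableEq α] (G : SimpleGraph α)
    [DecidableRel G.Adj] : dualFamily (G.neighborFinset ·) = (G.neighborFinset ·) := by
  ext v w
  rw [mem_dualFamily, SimpleGraph.mem_neighborFinset, SimpleGraph.mem_neighborFinset, G.adj_comm]

/-- The family `N` has trace complexity at most `r * m`: every nonempty set `B` meets the members of
`N` in at most `r * #B` distinct sets. For `N = G.neighborFinset` this is the neighborhood
complexity of the graph `G`. -/
def HasLinearTraces [Fintype ι] [DecidableEq α] (N : ι → Finset α) (r : ℕ) : Prop :=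
  ∀ B : Finset α, B.Nonempty → #(traces N univ B) ≤ r * #B

/-- For every `i ∈ I` such that `N i` meets `A`, the labels `f` of the elements of `N i ∩ A` have
nonzero sum. -/
def HasNonzeroSums [DecidableEq α] [AddCommMonoid W] (N : ι → Finset α) (I : Finset ι)
    (A : Finset α) (f : α → W) : Prop :=
  ∀ i ∈ I, (N i ∩ A).Nonempty → ∑ u ∈ N i ∩ A, f u ≠ 0

lemma exists_odd_card_filter_of_sum_ne_zero [DecidableEq W] [AddCommGroup W]
    [Module (ZMod 2) W] {s : Finset α} {f : α → W} (h : ∑ u ∈ s, f u ≠ 0) :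
    ∃ w, Odd #{u ∈ s | f u = w} := by
  contrapose! h
  change ∑ u ∈ s, id (f u) = 0
  rw [sum_comp]
  refine sum_eq_zero fun w _ ↦ ?_
  obtain ⟨m, hm⟩ := Nat.not_odd_iff_even.1 (h w)
  rw [hm, add_nsmul, ZModModule.add_self]

variable [DecidableEq α] [AddCommGroup W] {N : ι → Finset α} {I R : Finset ι}
  {A : Finset α}

lemma hasNonzeroSums_const_of_subsingleton {z : W} (hz : z ≠ 0) (hA : (A : Set α).Subsingleton) :
    HasNonzeroSums N I A fun _ ↦ z := by
  rintro i - ⟨u, hu⟩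
  have hsingle : N i ∩ A = {u} := eq_singleton_iff_unique_mem.2
    ⟨hu, fun v hv ↦ hA (mem_inter.1 hv).2 (mem_inter.1 hu).2⟩
  rwa [hsingle, sum_singleton]

lemma HasNonzeroSums.of_traces_subset {f : α → W} (hf : HasNonzeroSums N R A f)
    (hR : traces N I A ⊆ traces N R A) : HasNonzeroSums N I A f := by
  intro i hi hne
  obtain ⟨j, hj, hji⟩ := mem_traces.1 (hR (mem_traces.2 ⟨i, hi, rfl⟩))
  rw [← hji] at hne ⊢
  exact hf j hj hne

lemma sum_inter_update_add_single_add_single (S : Finset α) (f : α → W) {x y : α}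
    (hx : x ∈ A) (hy : y ∈ A) (z : W) :
    ∑ u ∈ S ∩ A, (Function.update f y 0 + Pi.single x z + Pi.single y z : α → W) u =
      ∑ u ∈ S ∩ A.erase y, f u + (if x ∈ S then z else 0) + (if y ∈ S then z else 0) := by
  simp only [Pi.add_apply, sum_add_distrib, sum_pi_single', mem_inter, hx, hy, and_true]
  congr 2
  rw [inter_erase]
  by_cases hyS : y ∈ S ∩ A
  · rw [sum_update_of_mem hyS, zero_add, erase_eq]
  · rw [sum_update_of_notMem hyS, erase_eq_of_notMem hyS]

lemma HasNonzeroSums.exists_of_erase [Fintype ι] [DecidableEq ι] [Fintype W] [Module (ZMod 2) W]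
    {f : α → W} {x y : α} (hx : x ∈ A) (hy : y ∈ A) (hxy : x ≠ y)
    (hf : HasNonzeroSums N I (A.erase y) f)
    (hcard : #((dualFamily N x ∆ dualFamily N y) ∩ I) < Fintype.card W) :
    ∃ g : α → W, HasNonzeroSums N I A g := by
  classical
  -- Adding `z` to the labels of both `x` and `y` preserves the sums over the sets that contain
  -- both or neither of them, since `z + z = 0`.
  obtain ⟨z, hz⟩ : ∃ z, z ∉ ((dualFamily N x ∆ dualFamily N y) ∩ I).image
      fun i ↦ ∑ u ∈ N i ∩ A.erase y, f u :=
    not_forall.1 fun h ↦ (card_image_le.trans_lt hcard).ne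
      (by rw [eq_univ_of_forall h, card_univ])
  refine ⟨Function.update f y 0 + Pi.single x z + Pi.single y z, fun i hi hne ↦ ?_⟩
  rw [sum_inter_update_add_single_add_single _ _ hx hy]
  have havoid (h : ¬(x ∈ N i ↔ y ∈ N i)) : ∑ u ∈ N i ∩ A.erase y, f u + z ≠ 0 := by
    refine fun h0 ↦ hz (mem_image.2 ⟨i, ?_, ?_⟩)
    · simp only [mem_inter, mem_symmDiff, mem_dualFamily]
      tauto
    · rw [eq_neg_of_add_eq_zero_left h0, ZModModule.neg_eq_self]
  by_cases hxi : x ∈ N i <;> by_cases hyi : y ∈ N i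
  · rw [if_pos hxi, if_pos hyi, add_assoc, ZModModule.add_self, add_zero]
    exact hf i hi ⟨x, mem_inter.2 ⟨hxi, mem_erase.2 ⟨hxy, hx⟩⟩⟩
  · rw [if_pos hxi, if_neg hyi, add_zero]
    exact havoid (by tauto)
  · rw [if_neg hxi, if_pos hyi, add_zero]
    exact havoid (by tauto)
  · rw [if_neg hxi, if_neg hyi, add_zero, add_zero]
    refine hf i hi ?_
    rwa [inter_erase, erase_eq_of_notMem fun h ↦ hyi (mem_inter.1 h).1]

lemma HasLinearTraces.card_traces_le {κ γ : Type*} [Fintype κ] [DecidableEq γ] {M : κ → Finset γ}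
    {r : ℕ} (hM : HasLinearTraces M r) (K : Finset κ) {B : Finset γ} (hB : B.Nonempty) :
    #(traces M K B) ≤ r * #B :=
  (card_le_card (image_subset_image (subset_univ K))).trans (hM B hB)

theorem exists_hasNonzeroSums [Fintype ι] [DecidableEq ι] [Fintype α] [Fintype W]
    [Module (ZMod 2) W] [Nontrivial W] {r : ℕ} (hN : HasLinearTraces N r)
    (hdual : HasLinearTraces (dualFamily N) r) (hW : 16 * r ^ 3 < Fintype.card W) (A : Finset α) :
    ∃ f : α → W, HasNonzeroSums N univ A f := by
  induction A using Finset.strongInduction with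
  | H A ih =>
    rcases (A : Set α).subsingleton_or_nontrivial with hA | hA
    · obtain ⟨z, hz⟩ := exists_ne (0 : W)
      exact ⟨_, hasNonzeroSums_const_of_subsingleton hz hA⟩
    obtain ⟨R, -, hinj, himage⟩ :=
      exists_subset_injOn_image_eq_of_surjOn (f := (N · ∩ A)) Set.univ (traces N univ A)
        fun T hT ↦ have ⟨i, _, hi⟩ := mem_traces.1 hT
          ⟨i, Set.mem_univ i, hi⟩
    have hR : #R ≤ r * #A := by
      rw [← card_image_of_injOn hinj, himage]
      exact hN A (coe_nonempty.1 hA.nonempty)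
    obtain ⟨x, hx, y, hy, hxy, hnear⟩ := exists_ne_card_symmDiff_inter_le hA hR
      fun B _ hB ↦ hdual.card_traces_le A hB
    obtain ⟨f, hf⟩ := ih (A.erase y) (erase_ssubset hy)
    obtain ⟨g, hg⟩ := HasNonzeroSums.exists_of_erase hx hy hxy
      (fun i _ ↦ hf i (mem_univ i) : HasNonzeroSums N R _ f) (hnear.trans_lt hW)
    exact ⟨g, hg.of_traces_subset himage.ge⟩

end Labeling

open Finset in
theorem improper_odd_coloring_of_linear_neighborhood_complexity_general (r : ℕ) :
    ∃ k : ℕ, 0 < k ∧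
      ∀ {ι α : Type*} [Fintype ι] [DecidableEq ι] [Fintype α] [DecidableEq α] (N : ι → Finset α),
        HasLinearTraces N r → HasLinearTraces (dualFamily N) r →
        ∃ c : α → Fin k, ∀ i, (N i).Nonempty → ∃ j, Odd #{u ∈ N i | c u = j} := by
  let W := Fin (16 * r ^ 3 + 1) → ZMod 2
  have hW : 16 * r ^ 3 < Fintype.card W := by
    rw [Fintype.card_fun, ZMod.card, Fintype.card_fin]
    exact (Nat.lt_succ_self _).trans Nat.lt_two_pow_self
  refine ⟨Fintype.card W, Fintype.card_pos, fun N hN hdual ↦ ?_⟩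
  obtain ⟨f, hf⟩ := exists_hasNonzeroSums (W := W) hN hdual hW univ
  refine ⟨fun u ↦ Fintype.equivFin W (f u), fun i hi ↦ ?_⟩
  have hsum : ∑ u ∈ N i, f u ≠ 0 := by
    simpa only [inter_univ] using hf i (mem_univ i) (by rwa [inter_univ])
  obtain ⟨w, hw⟩ := exists_odd_card_filter_of_sum_ne_zero hsum
  exact ⟨Fintype.equivFin W w, by simpa only [EmbeddingLike.apply_eq_iff_eq] using hw⟩

/-- Any graph with linear neighborhood complexity has bounded improper odd chromatic number. -/
theorem improper_odd_coloring_of_linear_neighborhood_complexity :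
    ∀ r : ℕ, 0 < r → ∃ k : ℕ, 0 < k ∧
      ∀ (V : Type) [Fintype V] [DecidableEq V] (G : SimpleGraph V) [DecidableRel G.Adj],
        NbhdComplexityLinear G r →
        ∃ c : V → Fin k, ∀ v : V, (G.neighborFinset v).Nonempty →
          ∃ i : Fin k, Odd ((G.neighborFinset v).filter (fun u => c u = i)).card := by
  intro r _
  obtain ⟨k, hk, hcolor⟩ := improper_odd_coloring_of_linear_neighborhood_complexity_general r
  exact ⟨k, hk, fun V _ _ G _ hG ↦ hcolor (G.neighborFinset ·) hG
    (by rw [dualFamily_neighborFinset]; exact hG)⟩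
end

section
/- Let r be a positive integer and let G be a finite simple graph with a bipartition (X,Y) such that for every nonempty subset A ⊆ V(G) the number of distinct sets of the form N(v) ∩ A with v ∈ V(G) is at most r·|A|. Then there exists a subset Y' ⊆ Y with |Y'| ≥ |Y|/(2r+1) such that no vertex of X of degree exactly 2 has both of its neighbors in Y'. -/
open Finset

section Degenerate

variable {V : Type*} {G : SimpleGraph V} [DecidableRel G.Adj]

/-- `d`-degeneracy of a graph: every nonempty finite set of vertices induces a subgraph with a
vertex of degree at most `d`. -/
def IsDegenerate (G : SimpleGraph V) [DecidableRel G.Adj] (d : ℕ) : Prop :=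
  ∀ s : Finset V, s.Nonempty → ∃ v : s, (G.induce (s : Set V)).degree v ≤ d

theorem exists_degree_le_of_two_mul_card_edgeFinset_le [Fintype V] [Nonempty V] {d : ℕ}
    (h : 2 * #G.edgeFinset ≤ d * Fintype.card V) : ∃ v, G.degree v ≤ d := by
  have hsum : ∑ v, G.degree v ≤ ∑ _v : V, d := by
    simpa [G.sum_degrees_eq_twice_card_edges, mul_comm] using h
  obtain ⟨v, -, hv⟩ := exists_le_of_sum_le univ_nonempty hsum
  exact ⟨v, hv⟩

theorem isDegenerate_of_two_mul_card_edgeFinset_induce_le {d : ℕ}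
    (h : ∀ s : Finset V, s.Nonempty → 2 * #(G.induce (s : Set V)).edgeFinset ≤ d * #s) :
    IsDegenerate G d := by
  intro s hs
  have : Nonempty (s : Set V) := hs.to_subtype
  exact exists_degree_le_of_two_mul_card_edgeFinset_le (by simpa using h s hs)

theorem IsDegenerate.exists_coloring_on {d : ℕ} (h : IsDegenerate G d) (s : Finset V) :
    ∃ c : V → Fin (d + 1), ∀ a ∈ s, ∀ b ∈ s, G.Adj a b → c a ≠ c b := by
  classical
  induction s using Finset.strongInduction with
  | H s ih =>
    obtain rfl | hs := s.eq_empty_or_nonempty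
    · exact ⟨0, by simp⟩
    obtain ⟨v, hv⟩ := h s hs
    obtain ⟨c, hc⟩ := ih (s.erase v) (erase_ssubset v.2)
    let usedColors := ((G.induce (s : Set V)).neighborFinset v).image (c ∘ Subtype.val)
    have hused : #usedColors < #(univ : Finset (Fin (d + 1))) := by
      simpa using Nat.lt_succ_of_le (card_image_le.trans hv)
    obtain ⟨i, -, hi⟩ := exists_mem_notMem_of_card_lt_card hused
    have hfree : ∀ b ∈ s, G.Adj v b → c b ≠ i := by
      rintro b hb hvb rfl
      exact hi (mem_image.2 ⟨⟨b, hb⟩, by simpa using hvb, rfl⟩)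
    refine ⟨Function.update c v i, fun a ha b hb hab ↦ ?_⟩
    by_cases hav : a = v
    · subst hav
      simpa [hab.ne'] using (hfree b hb hab).symm
    by_cases hbv : b = v
    · subst hbv
      simpa [hab.ne] using hfree a ha hab.symm
    simpa [hav, hbv] using hc a (mem_erase.2 ⟨hav, ha⟩) b (mem_erase.2 ⟨hbv, hb⟩) hab

theorem IsDegenerate.colorable [Finite V] {d : ℕ} (h : IsDegenerate G d) :
    G.Colorable (d + 1) := by
  have := Fintype.ofFinite V
  obtain ⟨c, hc⟩ := h.exists_coloring_on univ
  exact ⟨.mk c fun {a b} hab ↦ hc a (mem_univ a) b (mem_univ b) hab⟩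

end Degenerate

theorem exists_subset_isIndepSet_of_colorable {V : Type*} {G : SimpleGraph V} {n : ℕ}
    (h : G.Colorable n) (s : Finset V) :
    ∃ t ⊆ s, G.IsIndepSet t ∧ #s ≤ n * #t := by
  obtain ⟨C⟩ := h
  obtain rfl | ⟨v, -⟩ := s.eq_empty_or_nonempty
  · exact ⟨∅, by simp⟩
  obtain ⟨i, -, hmax⟩ := exists_max_image univ (fun j ↦ #{a ∈ s | C a = j}) ⟨C v, mem_univ _⟩
  refine ⟨{a ∈ s | C a = i}, filter_subset _ s, (C.isIndepSet_colorClass i).mono ?_, ?_⟩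
  · intro a ha
    exact (mem_filter.1 ha).2
  · calc #s
      _ = ∑ j, #{a ∈ s | C a = j} := card_eq_sum_card_fiberwise fun _ _ ↦ mem_coe.2 (mem_univ _)
      _ ≤ n * #{a ∈ s | C a = i} := by simpa using sum_le_card_nsmul univ _ _ hmax

section NeighborPairGraph

variable {V : Type*} (G : SimpleGraph V)

/-- The graph whose edges are the pairs of vertices that form the whole neighborhood of a vertex
of `G`. Its independent sets are those containing no neighborhood of a vertex of degree two. -/
def neighborPairGraph : SimpleGraph V where
  Adj a b := a ≠ b ∧ ∃ x, G.neighborSet x = {a, b}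
  symm := ⟨fun a b ⟨hab, x, hx⟩ ↦ ⟨hab.symm, x, hx.trans (Set.pair_comm a b)⟩⟩
  loopless := ⟨fun _ h ↦ h.1 rfl⟩

variable {G}

theorem not_neighborFinset_subset_of_isIndepSet {t : Finset V}
    (ht : (neighborPairGraph G).IsIndepSet t) {x : V} [Fintype (G.neighborSet x)]
    (hx : G.degree x = 2) : ¬ G.neighborFinset x ⊆ t := by
  classical
  intro hsub
  obtain ⟨a, b, hab, hN⟩ := card_eq_two.1 hx
  have hadj : (neighborPairGraph G).Adj a b :=
    ⟨hab, x, by rw [← G.coe_neighborFinset, hN, coe_pair]⟩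
  rw [hN, insert_subset_iff, singleton_subset_iff] at hsub
  exact ht hsub.1 hsub.2 hab hadj

theorem card_edgeFinset_induce_neighborPairGraph_le [Fintype V] [DecidableEq V]
    [DecidableRel G.Adj] [DecidableRel (neighborPairGraph G).Adj] (A : Finset V) :
    #((neighborPairGraph G).induce (A : Set V)).edgeFinset ≤
      #(univ.image fun v ↦ G.neighborFinset v ∩ A) := by
  refine card_le_card_of_injOn (fun e ↦ (e.map Subtype.val).toFinset) ?_ ?_
  · intro e he
    induction e with | h a b
    obtain ⟨-, x, hx⟩ : (neighborPairGraph G).Adj a b := by simpa using he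
    have hN : G.neighborFinset x = {a.1, b.1} := by
      rw [← coe_inj, G.coe_neighborFinset, hx, coe_pair]
    refine mem_coe.2 (mem_image.2 ⟨x, mem_univ x, ?_⟩)
    simp [hN, Sym2.toFinset_mk_eq]
  · intro e _ f _ hef
    refine Sym2.map.injective Subtype.val_injective (Sym2.ext fun v ↦ ?_)
    simpa using Finset.ext_iff.1 hef v

end NeighborPairGraph

theorem large_subset_avoiding_degree_two_neighbors_general {V : Type} [Fintype V] [DecidableEq V]
    (r : ℕ) (G : SimpleGraph V) [DecidableRel G.Adj] (Y : Finset V)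
    (hnc : NbhdComplexityLinear G r) :
    ∃ Y' ⊆ Y, Y.card ≤ (2 * r + 1) * Y'.card ∧
      ∀ x, G.degree x = 2 → ¬ G.neighborFinset x ⊆ Y' := by
  classical
  have hdeg : IsDegenerate (neighborPairGraph G) (2 * r) :=
    isDegenerate_of_two_mul_card_edgeFinset_induce_le fun A hA ↦ by
      rw [mul_assoc]
      gcongr
      exact (card_edgeFinset_induce_neighborPairGraph_le A).trans (hnc A hA)
  obtain ⟨Y', hsub, hindep, hcard⟩ := exists_subset_isIndepSet_of_colorable hdeg.colorable Y
  exact ⟨Y', hsub, hcard, fun _ ↦ not_neighborFinset_subset_of_isIndepSet hindep⟩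

/-- In a bipartite graph of linear neighborhood complexity there is a subset `Y'` of `Y` of
size at least `|Y|/(2r+1)` such that no degree-2 vertex of `X` has both neighbors in `Y'`. -/
theorem large_subset_avoiding_degree_two_neighbors {V : Type} [Fintype V] [DecidableEq V]
    (r : ℕ) (hr : 0 < r) (G : SimpleGraph V) [DecidableRel G.Adj]
    (X Y : Finset V) (hdisj : Disjoint X Y) (hcover : X ∪ Y = Finset.univ)
    (hbip : ∀ u v : V, G.Adj u v → (u ∈ X ∧ v ∈ Y) ∨ (u ∈ Y ∧ v ∈ X))
    (hnc : NbhdComplexityLinear G r) :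
    ∃ Y' ⊆ Y, Y.card ≤ (2 * r + 1) * Y'.card ∧
      ∀ x ∈ X, G.degree x = 2 → ¬ G.neighborFinset x ⊆ Y' := by
  obtain ⟨Y', hsub, hcard, h⟩ := large_subset_avoiding_degree_two_neighbors_general r G Y hnc
  exact ⟨Y', hsub, hcard, fun x _ ↦ h x⟩
end

section
/- Let t ≥ 3 and ℓ ≥ 1 be integers and suppose that every finite graph with no K_{t−1} minor has star-arboricity at most ℓ. Then for every finite graph G with no K_t minor and every spanning forest T of G, there exists a coloring φ : E(G) \ E(T) → {1,…,16ℓ+1} such that for every edge f ∈ E(T) that is not a bridge of G, there exists a color i ∈ {1,…,16ℓ+1} occurring an odd number of times on C*(T,f) \ {f}. -/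
/-- `T` is a spanning forest of `G`. -/
def IsSpanningForest {V : Type} (G T : SimpleGraph V) : Prop :=
  T ≤ G ∧ T.IsAcyclic ∧ ∀ u v : V, G.Reachable u v ↔ T.Reachable u v

/-- The fundamental cut `C*(T, f)`: the set of edges of `G` whose endpoints lie in different
connected components of `T - f`. -/
def fundCut {V : Type} (G T : SimpleGraph V) (f : Sym2 V) : Set (Sym2 V) :=
  {e | e ∈ G.edgeSet ∧ ∃ u v : V, e = s(u, v) ∧ ¬ (T.deleteEdges {f}).Reachable u v}

/-- `G` has a `K_t` minor: there are `t` pairwise disjoint nonempty branch sets, each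
inducing a connected subgraph, with an edge between any two of them. -/
def HasCliqueMinor {V : Type} (G : SimpleGraph V) (t : ℕ) : Prop :=
  ∃ S : Fin t → Set V, (∀ i, (S i).Nonempty) ∧
    (Pairwise fun i j => Disjoint (S i) (S j)) ∧
    (∀ i, (G.induce (S i)).Connected) ∧
    (∀ i j, i ≠ j → ∃ u ∈ S i, ∃ v ∈ S j, G.Adj u v)

/-- A star forest: an acyclic graph in which every connected component has a vertex
adjacent to all other vertices of that component. -/
def IsStarForest {V : Type} (H : SimpleGraph V) : Prop :=
  H.IsAcyclic ∧ ∀ u : V, ∃ c : V, H.Reachable u c ∧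
    ∀ w : V, H.Reachable c w → w ≠ c → H.Adj c w

/-- The star-arboricity of `H` is at most `ℓ`: its edge set can be decomposed into `ℓ`
star forests. -/
def StarArboricityLE {V : Type} (H : SimpleGraph V) (ℓ : ℕ) : Prop :=
  ∃ φ : Sym2 V → Fin ℓ, ∀ i : Fin ℓ,
    IsStarForest (SimpleGraph.fromEdgeSet {e | e ∈ H.edgeSet ∧ φ e = i})

/-!
Root every component of `T`. The fundamental cut of `f ∈ T` consists of the edges crossing the
vertex set `D f` below `f`, and the sets `D f` form a laminar family.

Select *leaders* among the sets `D f` from the top down, skipping a set when some non-forest edge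
crosses both it and a leader above it; this leader above is then unique. A selected set is its own
leader. Make two leaders adjacent when a non-forest edge crosses both. Adjacent leaders are disjoint
and lie inside the same other leaders, so a `K_{t-1}` minor among the leaders lifts to disjoint
connected subgraphs of `G`, and the part of the component above them is adjacent to each, which
would give a `K_t` minor of `G`. Hence the leaders have star-arboricity at most `ℓ`; two-colouring
each of the `ℓ` star forests colours them properly by strings of `ℓ` bits.

A non-forest edge crosses at most two leaders. It records a position at which their strings differ,
together with the parity of the number of leaders containing both its ends. Among the edges of
`C*(T, f)` that parity singles out those which also cross the leader of `D f`. Fix one of the `2ℓ`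
records and collect, for every `f`, the edges with this record that cross both `D f` and its leader.
Each value of the leader's bit at the recorded position contributes a laminar family of edge sets,
and eight colours suffice to give every nonempty member of two laminar families a colour of odd
multiplicity. This makes `2 · ℓ · 8 = 16ℓ` colours.
-/

/-- A laminar family: any two members are comparable or disjoint. Stated for an order with a least
element so that it covers families of sets and of finsets alike. -/
def IsLaminar {β : Type*} [PartialOrder β] [OrderBot β] (A : Set β) : Prop :=
  ∀ ⦃a⦄, a ∈ A → ∀ ⦃b⦄, b ∈ A → a ≤ b ∨ b ≤ a ∨ Disjoint a b

section Laminar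

variable {α : Type*} {A : Set (Finset α)}

theorem IsLaminar.mono {β : Type*} [PartialOrder β] [OrderBot β] {A B : Set β}
    (hB : IsLaminar B) (hAB : A ⊆ B) : IsLaminar A :=
  fun _ ha _ hb ↦ hB (hAB ha) (hAB hb)

theorem IsLaminar.image {β γ : Type*} [PartialOrder β] [OrderBot β] [PartialOrder γ] [OrderBot γ]
    {A : Set β} (hA : IsLaminar A) {f : β → γ} (hf : Monotone f)
    (hdisj : ∀ a b, Disjoint a b → Disjoint (f a) (f b)) : IsLaminar (f '' A) := by
  rintro _ ⟨a, ha, rfl⟩ _ ⟨b, hb, rfl⟩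
  exact (hA ha hb).imp (hf ·) (Or.imp (hf ·) (hdisj a b))

theorem IsLaminar.finset_induction [DecidableEq α] (hA : IsLaminar A) {P : Finset α → Prop}
    (indecomposable : ∀ U, (∀ S ∈ A, S ⊆ U → S.Nonempty → S = U) → P U)
    (split : ∀ U, ∀ S ∈ A, S ⊂ U → S.Nonempty →
      (∀ X ∈ A, X ⊆ U → X ≠ U → X ⊆ S ∨ X ⊆ U \ S) → P S → P (U \ S) → P U)
    (U : Finset α) : P U := by
  induction U using Finset.strongInduction with
  | H U ih =>
    by_cases hU : ∀ S ∈ A, S ⊆ U → S.Nonempty → S = U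
    · exact indecomposable U hU
    have hfin : {S | S ∈ A ∧ S ⊂ U ∧ S.Nonempty}.Finite :=
      U.powerset.finite_toSet.subset fun S hS ↦ Finset.mem_powerset.2 hS.2.1.subset
    obtain ⟨S, ⟨hSA, hSU, hS⟩, hmax⟩ := hfin.exists_maximal <| by
      push Not at hU
      obtain ⟨S, hSA, hSU, hS, hne⟩ := hU
      exact ⟨S, hSA, hSU.ssubset_of_ne hne, hS⟩
    refine split U S hSA hSU hS (fun X hXA hXU hne ↦ ?_) (ih S hSU)
      (ih _ (Finset.sdiff_ssubset hSU.subset hS))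
    rcases hA hXA hSA with hXS | hSX | hdisj
    · exact .inl hXS
    · exact .inl (hmax ⟨hXA, hXU.ssubset_of_ne hne, hS.mono hSX⟩ hSX)
    · exact .inr (Finset.subset_sdiff.2 ⟨hXU, hdisj⟩)

theorem exists_pairing_of_even_card {U : Finset α} (hU : Even U.card) :
    ∃ M : α → α, ∀ x ∈ U, M x ∈ U ∧ M (M x) = x ∧ M x ≠ x := by
  classical
  obtain ⟨k, hk⟩ := hU
  let e : U ≃ Fin k × Bool := Fintype.equivOfCardEq (by simp [hk, mul_two])
  let N (x : U) : U := e.symm ((e x).1, !(e x).2)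
  have hNN (x : U) : N (N x) = x := by simp [N]
  have hN (x : U) : N x ≠ x := fun h ↦ by simpa [N] using congrArg (fun y ↦ (e y).2) h
  refine ⟨fun x ↦ if hx : x ∈ U then N ⟨x, hx⟩ else x, fun x hx ↦ ?_⟩
  simp only [hx, dif_pos, Finset.coe_mem, Subtype.coe_eta, hNN, true_and]
  exact fun h ↦ hN ⟨x, hx⟩ (Subtype.ext h)

theorem IsLaminar.exists_pairing (hA : IsLaminar A) (heven : ∀ S ∈ A, Even S.card)
    (U : Finset α) :
    ∃ M : α → α, (∀ x ∈ U, M x ∈ U ∧ M (M x) = x) ∧ (Even U.card → ∀ x ∈ U, M x ≠ x) ∧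
      ∀ S ∈ A, S ⊆ U → ∀ x ∈ S, M x ∈ S ∧ M x ≠ x := by
  classical
  induction U using hA.finset_induction with
  | indecomposable U hind =>
    by_cases hU : Even U.card
    · obtain ⟨M, hM⟩ := exists_pairing_of_even_card hU
      refine ⟨M, fun x hx ↦ ⟨(hM x hx).1, (hM x hx).2.1⟩, fun _ x hx ↦ (hM x hx).2.2, ?_⟩
      intro S hSA hSU x hx
      obtain rfl := hind S hSA hSU ⟨x, hx⟩
      exact ⟨(hM x hx).1, (hM x hx).2.2⟩
    · refine ⟨id, fun x hx ↦ ⟨hx, rfl⟩, fun h ↦ absurd h hU, fun S hSA hSU x hx ↦ ?_⟩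
      exact absurd (hind S hSA hSU ⟨x, hx⟩ ▸ heven S hSA) hU
  | split U S hSA hSU _ hcases ihS ihU =>
    obtain ⟨M, hMM, hMne, hM⟩ := ihS
    obtain ⟨N, hNN, hNne, hN⟩ := ihU
    have hinv (x : α) (hx : x ∈ U) : S.piecewise M N x ∈ U ∧
        S.piecewise M N (S.piecewise M N x) = x := by
      by_cases hxS : x ∈ S
      · simp [hxS, hMM x hxS, hSU.subset (hMM x hxS).1]
      · have := hNN x (Finset.mem_sdiff.2 ⟨hx, hxS⟩)
        simp_all
    have hne (hU : Even U.card) (x : α) (hx : x ∈ U) : S.piecewise M N x ≠ x := by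
      by_cases hxS : x ∈ S
      · simpa [hxS] using hMne (heven S hSA) x hxS
      · have hcard : Even (U \ S).card := by
          rw [Finset.card_sdiff_of_subset hSU.subset]
          exact hU.tsub (heven S hSA)
        simpa [hxS] using hNne hcard x (Finset.mem_sdiff.2 ⟨hx, hxS⟩)
    refine ⟨S.piecewise M N, hinv, hne, fun X hXA hXU x hx ↦ ?_⟩
    by_cases hXU' : X = U
    · subst hXU'
      exact ⟨(hinv x hx).1, hne (heven X hXA) x hx⟩
    rcases hcases X hXA hXU hXU' with hXS | hXS
    · simpa [hXS hx] using hM X hXA hXS x hx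
    · simpa [(Finset.mem_sdiff.1 (hXS hx)).2] using hN X hXA hXS x hx

theorem IsLaminar.exists_sum_ne_zero {G : Type*} [AddCommMonoid G]
    (hG : ∀ g : G, g ≠ 0 → ∃ a b, a ≠ 0 ∧ b ≠ 0 ∧ a + b = g) (hA : IsLaminar A) (U : Finset α)
    (hU : U.Nonempty) {g : G} (hg : g ≠ 0) :
    ∃ h : α → G, ∑ x ∈ U, h x = g ∧ ∀ S ∈ A, S ⊆ U → S.Nonempty → ∑ x ∈ S, h x ≠ 0 := by
  classical
  induction U using hA.finset_induction generalizing g with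
  | indecomposable U hind =>
    obtain ⟨x, hx⟩ := hU
    have hsum : ∑ y ∈ U, Pi.single x g y = g := by simp [hx]
    refine ⟨Pi.single x g, hsum, fun S hSA hSU hS ↦ ?_⟩
    rwa [hind S hSA hSU hS, hsum]
  | split U S _ hSU hS hcases ihS ihU =>
    obtain ⟨a, b, ha, hb, hab⟩ := hG g hg
    obtain ⟨p, hpS, hp⟩ := ihS hS ha
    obtain ⟨q, hqS, hq⟩ := ihU (Finset.sdiff_nonempty.2 hSU.2) hb
    let h x := if x ∈ S then p x else q x
    have hin {X : Finset α} (hX : X ⊆ S) : ∑ x ∈ X, h x = ∑ x ∈ X, p x :=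
      Finset.sum_congr rfl fun x hx ↦ if_pos (hX hx)
    have hout {X : Finset α} (hX : X ⊆ U \ S) : ∑ x ∈ X, h x = ∑ x ∈ X, q x :=
      Finset.sum_congr rfl fun x hx ↦ if_neg (Finset.mem_sdiff.1 (hX hx)).2
    have hsum : ∑ x ∈ U, h x = g := by
      rw [← Finset.sum_sdiff hSU.subset, hin subset_rfl, hout subset_rfl, hpS, hqS, add_comm, hab]
    refine ⟨h, hsum, fun X hXA hXU hX ↦ ?_⟩
    by_cases hne : X = U
    · rwa [hne, hsum]
    rcases hcases X hXA hXU hne with hXS | hXS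
    · exact hin hXS ▸ hp X hXA hXS hX
    · exact hout hXS ▸ hq X hXA hXS hX

end Laminar

section Alternating

variable {α : Type*} {a b : α → α}

open Equiv.Perm in
/-- Conjugation by `A` inverts `A * B`, so the midpoint of a path from `x` to `A x` in an orbit of
`A * B` would be fixed by `A` or by `B`. -/
theorem not_sameCycle_mul_apply (A B : Equiv.Perm α) (hA : A * A = 1) (hB : B * B = 1)
    (hA' : ∀ x, A x ≠ x) (hB' : ∀ x, B x ≠ x) (x : α) : ¬ SameCycle (A * B) x (A x) := by
  have hA1 : A⁻¹ = A := inv_eq_of_mul_eq_one_left hA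
  have hB1 : B⁻¹ = B := inv_eq_of_mul_eq_one_left hB
  have hconj (m : ℤ) : A * (A * B) ^ m = (A * B) ^ (-m) * A := by
    have hσ : A * (A * B) * A⁻¹ = (A * B)⁻¹ := by
      rw [mul_inv_rev, hA1, hB1, ← mul_assoc, hA, one_mul]
    rw [zpow_neg, ← inv_zpow, ← hσ, conj_zpow, inv_mul_cancel_right]
  rintro ⟨n, hn⟩
  obtain ⟨m, rfl | rfl⟩ := n.even_or_odd'
  · apply hA' (((A * B) ^ m) x)
    rw [← mul_apply, hconj, mul_apply, ← hn, ← mul_apply, ← zpow_add]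
    congr 2
    ring
  · apply hB' (((A * B) ^ m) x)
    rw [← A.injective.eq_iff, ← mul_apply A B, ← mul_apply (A * B), ← zpow_one_add,
      ← mul_apply A, hconj, mul_apply, ← hn, ← mul_apply, ← zpow_add]
    congr 2
    ring

/-- Both `a` and `b` exchange the orbit of `x` under `a ∘ b` with the orbit of `a x`; a linear order
on the orbits selects one of each such pair. -/
theorem exists_alternating_of_fixedPointFree (ha : Function.Involutive a)
    (hb : Function.Involutive b) (ha' : ∀ x, a x ≠ x) (hb' : ∀ x, b x ≠ x) :
    ∃ s : α → Bool, ∀ x, s (a x) = !s x ∧ s (b x) = !s x := by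
  classical
  let A := ha.toPerm
  let B := hb.toPerm
  let q (x : α) := Quotient.mk (Equiv.Perm.SameCycle.setoid (A * B)) x
  have hqa (x : α) : q (a x) ≠ q x := fun h ↦
    not_sameCycle_mul_apply A B (Equiv.ext ha) (Equiv.ext hb) ha' hb' x (Quotient.exact h).symm
  have hqab (x : α) : q (a (b x)) = q x :=
    Quotient.sound ((Equiv.Perm.sameCycle_apply_left (f := A * B)).2 (.refl _ x))
  have hqb (x : α) : q (b x) = q (a x) := by rw [← hqab (b x), hb]
  let _ : LinearOrder (Quotient (Equiv.Perm.SameCycle.setoid (A * B))) :=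
    linearOrderOfSTO WellOrderingRel
  have hswap (x : α) : decide (q (a x) < q x) = !decide (q x < q (a x)) := by
    rw [← decide_not, decide_eq_decide, not_lt, (hqa x).le_iff_lt]
  refine ⟨fun x ↦ decide (q x < q (a x)), fun x ↦ ⟨?_, ?_⟩⟩
  · simpa only [ha x] using hswap x
  · simpa only [hqb, hqab] using hswap x

theorem exists_alternating (ha : Function.Involutive a) (hb : Function.Involutive b) :
    ∃ s : α → Bool, (∀ x, a x ≠ x → s (a x) = !s x) ∧ ∀ x, b x ≠ x → s (b x) = !s x := by
  classical
  -- On two copies of `α`, exchanging the copies of a fixed point leaves no fixed points.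
  let d (c : α → α) (p : α × Bool) : α × Bool := if c p.1 = p.1 then (p.1, !p.2) else (c p.1, p.2)
  have hd {c : α → α} (hc : Function.Involutive c) : Function.Involutive (d c) := by
    rintro ⟨x, i⟩
    by_cases h : c x = x
    · simp [d, h]
    · simp [d, h, hc x, Ne.symm h]
  have hd' (c : α → α) (p : α × Bool) : d c p ≠ p := by
    by_cases h : c p.1 = p.1 <;> simp [d, h, Prod.ext_iff]
  obtain ⟨s, hs⟩ := exists_alternating_of_fixedPointFree (hd ha) (hd hb) (hd' a) (hd' b)
  refine ⟨fun x ↦ s (x, false), fun x hx ↦ ?_, fun x hx ↦ ?_⟩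
  · simpa [d, hx] using (hs (x, false)).1
  · simpa [d, hx] using (hs (x, false)).2

end Alternating

section Coloring

theorem exists_odd_fiber_of_sum_ne_zero {α κ G : Type*} [DecidableEq κ] [AddCommMonoid G]
    (hG : ∀ g : G, g + g = 0) (F : κ → G) (c : α → κ) {S : Finset α} (h : ∑ x ∈ S, F (c x) ≠ 0) :
    ∃ k, Odd (S.filter (c · = k)).card := by
  by_contra! hk
  refine h ((Finset.sum_comp F c).trans (Finset.sum_eq_zero fun k _ ↦ ?_))
  obtain ⟨m, hm⟩ := Nat.not_odd_iff_even.1 (hk k)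
  rw [hm, add_nsmul, hG]

/-- The two coordinates of a labelling of one class of `s` by the Klein four-group are shared out
between each element and its partner under `M`, which lies in the other class. -/
theorem IsLaminar.exists_alternating_sum_ne_zero {α : Type*} [Finite α]
    {A : Set (Finset α)} (hA : IsLaminar A) {M : α → α} (hM : Function.Involutive M) {s : α → Bool}
    (hs : ∀ S ∈ A, ∀ x ∈ S, M x ∈ S ∧ s (M x) = !s x) :
    ∃ v : α → ZMod 2, ∀ S ∈ A, S.Nonempty →
      ∑ x ∈ S, (if s x then (v x, 0) else (0, v x)) ≠ 0 := by
  have := Fintype.ofFinite α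
  rcases isEmpty_or_nonempty α with _ | _
  · exact ⟨0, fun S _ ⟨x, _⟩ ↦ isEmptyElim x⟩
  have hA' : IsLaminar (Finset.filter (s ·) '' A) :=
    hA.image (Finset.monotone_filter_left _) fun _ _ h ↦ Finset.disjoint_filter_filter h
  obtain ⟨h, -, hh⟩ := hA'.exists_sum_ne_zero (G := ZMod 2 × ZMod 2) (by decide) Finset.univ
    Finset.univ_nonempty (g := (1, 0)) (by decide)
  let v x := if s x then (h x).1 else (h (M x)).2
  refine ⟨v, fun S hSA ⟨x, hx⟩ ↦ ?_⟩
  have hne : (S.filter (s ·)).Nonempty := by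
    by_cases hsx : s x
    · exact ⟨x, by simp [hx, hsx]⟩
    · exact ⟨M x, by simp [hs S hSA x hx, hsx]⟩
  have hswap : ∑ x ∈ S with ¬ s x, ((0, (h (M x)).2) : ZMod 2 × ZMod 2) =
      ∑ x ∈ S with s x, (0, (h x).2) :=
    Finset.sum_bij' (fun x _ ↦ M x) (fun x _ ↦ M x) (by simp +contextual [hs S hSA])
      (by simp +contextual [hs S hSA]) (by simp [hM _]) (by simp [hM _]) (by simp)
  have hsum : ∑ x ∈ S with s x, h x = ∑ x ∈ S, (if s x then (v x, 0) else (0, v x)) := by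
    calc ∑ x ∈ S with s x, h x
        = ∑ x ∈ S with s x, (((h x).1, 0) + (0, (h x).2)) := by simp
      _ = ∑ x ∈ S with s x, ((h x).1, 0) + ∑ x ∈ S with ¬ s x, (0, (h (M x)).2) := by
        rw [Finset.sum_add_distrib, hswap]
      _ = ∑ x ∈ S, (if s x then ((h x).1, 0) else (0, (h (M x)).2)) := (Finset.sum_ite _ _).symm
      _ = ∑ x ∈ S, (if s x then (v x, 0) else (0, v x)) := by
        congr! with x <;> simp_all [v]
  exact hsum ▸ hh _ ⟨S, hSA, rfl⟩ (Finset.subset_univ _) hne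

theorem exists_coloring_of_isLaminar_finset {α : Type*} [Finite α]
    {A B : Set (Finset α)} (hA : IsLaminar A) (hB : IsLaminar B) :
    ∃ c : α → Bool × ZMod 2 × ZMod 2, ∀ S ∈ A ∪ B, S.Nonempty →
      ∃ k, Odd (S.filter (c · = k)).card := by
  have := Fintype.ofFinite α
  let evens (A : Set (Finset α)) : Set (Finset α) := {S ∈ A | Even S.card}
  have hA' : IsLaminar (evens A) := hA.mono (Set.sep_subset _ _)
  have hB' : IsLaminar (evens B) := hB.mono (Set.sep_subset _ _)
  obtain ⟨M, hM, -, hMA⟩ := hA'.exists_pairing (fun S hS ↦ hS.2) Finset.univ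
  obtain ⟨N, hN, -, hNB⟩ := hB'.exists_pairing (fun S hS ↦ hS.2) Finset.univ
  have hMM : Function.Involutive M := fun x ↦ (hM x (Finset.mem_univ x)).2
  have hNN : Function.Involutive N := fun x ↦ (hN x (Finset.mem_univ x)).2
  obtain ⟨s, hsM, hsN⟩ := exists_alternating hMM hNN
  obtain ⟨u, hu⟩ := hA'.exists_alternating_sum_ne_zero hMM fun S hS x hx ↦
    (hMA S hS S.subset_univ x hx).imp_right (hsM x)
  obtain ⟨v, hv⟩ := hB'.exists_alternating_sum_ne_zero hNN fun S hS x hx ↦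
    (hNB S hS S.subset_univ x hx).imp_right (hsN x)
  have hG : ∀ g : ZMod 2 × ZMod 2, g + g = 0 := by decide
  refine ⟨fun x ↦ (s x, u x, v x), fun S hS hne ↦ ?_⟩
  rcases Nat.even_or_odd S.card with heven | hodd
  · rcases hS with hSA | hSB
    · exact exists_odd_fiber_of_sum_ne_zero hG
        (fun k : Bool × ZMod 2 × ZMod 2 ↦ if k.1 then (k.2.1, 0) else (0, k.2.1)) _
        (hu S ⟨hSA, heven⟩ hne)
    · exact exists_odd_fiber_of_sum_ne_zero hG
        (fun k : Bool × ZMod 2 × ZMod 2 ↦ if k.1 then (k.2.2, 0) else (0, k.2.2)) _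
        (hv S ⟨hSB, heven⟩ hne)
  · refine exists_odd_fiber_of_sum_ne_zero CharTwo.add_self_eq_zero (fun _ ↦ (1 : ZMod 2)) _ ?_
    simpa [ZMod.natCast_eq_zero_iff_even] using hodd

theorem exists_coloring_of_isLaminar {α : Type*} [Finite α] {A B : Set (Set α)}
    (hA : IsLaminar A) (hB : IsLaminar B) :
    ∃ c : α → Bool × ZMod 2 × ZMod 2, ∀ S ∈ A ∪ B, S.Nonempty →
      ∃ k, Odd {x ∈ S | c x = k}.ncard := by
  classical
  have hcoe {A : Set (Set α)} (hA : IsLaminar A) : IsLaminar {S : Finset α | ↑S ∈ A} :=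
    fun S hS T hT ↦ by simpa using hA hS hT
  obtain ⟨c, hc⟩ := exists_coloring_of_isLaminar_finset (hcoe hA) (hcoe hB)
  refine ⟨c, fun S hS hne ↦ ?_⟩
  lift S to Finset α using S.toFinite
  obtain ⟨k, hk⟩ := hc S hS (by simpa using hne)
  refine ⟨k, ?_⟩
  rwa [← Set.ncard_coe_finset, Finset.coe_filter] at hk

end Coloring

section Leaders

variable {V : Type*} {L K : Set (Set V)} {E : Set (Sym2 V)} {a b g : Set V} {e : Sym2 V}

/-- The edge `e` has exactly one endpoint in `S`. -/
def Crosses (e : Sym2 V) (S : Set V) : Prop :=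
  ∃ x y, e = s(x, y) ∧ x ∈ S ∧ y ∉ S

theorem crosses_mk {x y : V} {S : Set V} : Crosses s(x, y) S ↔ ¬ (x ∈ S ↔ y ∈ S) := by
  constructor
  · rintro ⟨u, v, he, hu, hv⟩
    rcases Sym2.eq_iff.1 he with ⟨rfl, rfl⟩ | ⟨rfl, rfl⟩ <;> tauto
  · intro h
    by_cases hx : x ∈ S
    · exact ⟨x, y, rfl, hx, by tauto⟩
    · exact ⟨y, x, Sym2.eq_swap, by tauto, hx⟩

theorem Crosses.nonempty (h : Crosses e a) : a.Nonempty :=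
  let ⟨x, _, _, hx, _⟩ := h
  ⟨x, hx⟩

theorem Crosses.of_subset_of_subset (ha : Crosses e a) (hg : Crosses e g) (hab : a ⊆ b)
    (hbg : b ⊆ g) : Crosses e b := by
  obtain ⟨x, y, rfl, hx, -⟩ := ha
  have hyg : y ∉ g := fun h ↦ crosses_mk.1 hg ⟨fun _ ↦ h, fun _ ↦ hbg (hab hx)⟩
  exact ⟨x, y, rfl, hab hx, fun h ↦ hyg (hbg h)⟩

theorem Crosses.disjoint_of_subset (ha : Crosses e a) (hb : Crosses e b) (hab : Disjoint a b)
    (hag : a ⊆ g) (hbg : b ⊆ g) : ¬ Crosses e g := by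
  obtain ⟨x, y, rfl, hx, -⟩ := ha
  have hyb : y ∈ b := by
    by_contra h
    exact crosses_mk.1 hb ⟨fun hxb ↦ (hab.notMem_of_mem_left hx hxb).elim, fun h' ↦ (h h').elim⟩
  exact fun hg ↦ crosses_mk.1 hg ⟨fun _ ↦ hbg hyb, fun _ ↦ hag hx⟩

/-- The leaders of the family `L`, selected greedily from the largest members down: a member is
skipped exactly when an edge of `E` crossing it also crosses a leader strictly above it. -/
def IsLeaderSet (L : Set (Set V)) (E : Set (Sym2 V)) (K : Set (Set V)) : Prop :=
  ∀ a, a ∈ K ↔ a ∈ L ∧ ∀ b ∈ K, a ⊂ b → ∀ e ∈ E, Crosses e a → ¬ Crosses e b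

theorem exists_isLeaderSet [Finite V] (L : Set (Set V)) (E : Set (Sym2 V)) :
    ∃ K, IsLeaderSet L E K := by
  let wf : WellFounded fun b a : Set V ↦ b > a := wellFounded_gt
  let K : Set (Set V) := {a | wf.fix (C := fun _ ↦ Prop) (fun a leader ↦
    a ∈ L ∧ ∀ b, ∀ h : a ⊂ b, leader b h → ∀ e ∈ E, Crosses e a → ¬ Crosses e b) a}
  refine ⟨K, fun a ↦ ?_⟩
  rw [Set.mem_ofPred_eq, wf.fix_eq]
  exact and_congr_right fun _ ↦ forall_congr' fun b ↦ forall_comm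

namespace IsLeaderSet

theorem subset (hK : IsLeaderSet L E K) : K ⊆ L := fun a ha ↦ ((hK a).1 ha).1

theorem disjoint (hK : IsLeaderSet L E K) (hL : IsLaminar L) (ha : a ∈ K) (hb : b ∈ K)
    (hab : a ≠ b) (he : e ∈ E) (hea : Crosses e a) (heb : Crosses e b) : Disjoint a b := by
  rcases hL (hK.subset ha) (hK.subset hb) with h | h | h
  · exact absurd heb (((hK a).1 ha).2 b hb (h.ssubset_of_ne hab) e he hea)
  · exact absurd hea (((hK b).1 hb).2 a ha (h.ssubset_of_ne hab.symm) e he heb)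
  · exact h

theorem eq_or_eq (hK : IsLeaderSet L E K) (hL : IsLaminar L) (ha : a ∈ K) (hb : b ∈ K)
    (hg : g ∈ K) (hab : a ≠ b) (he : e ∈ E) (hea : Crosses e a) (heb : Crosses e b)
    (heg : Crosses e g) : g = a ∨ g = b := by
  by_contra! h
  exact hea.disjoint_of_subset heb (hK.disjoint hL ha hb hab he hea heb)
    (hK.disjoint hL ha hg h.1.symm he hea heg).subset_compl_right
    (hK.disjoint hL hb hg h.2.symm he heb heg).subset_compl_right
    (by
      obtain ⟨x, y, rfl, hx, hy⟩ := heg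
      exact crosses_mk.2 (by simp [hx, hy]))

theorem exists_leader (hK : IsLeaderSet L E K) (ha : a ∈ L) (hcross : ∃ e ∈ E, Crosses e a) :
    ∃ g ∈ K, a ⊆ g ∧ ∃ e ∈ E, Crosses e a ∧ Crosses e g := by
  by_cases haK : a ∈ K
  · obtain ⟨e, he, hea⟩ := hcross
    exact ⟨a, haK, subset_rfl, e, he, hea, hea⟩
  · rw [hK a] at haK
    push Not at haK
    obtain ⟨g, hg, hag, e, he, hea, heg⟩ := haK ha
    exact ⟨g, hg, hag.subset, e, he, hea, heg⟩

theorem leader_unique (hK : IsLeaderSet L E K) (hL : IsLaminar L) {g g' : Set V} {e e' : Sym2 V}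
    (hg : g ∈ K) (hg' : g' ∈ K) (hag : a ⊆ g) (hag' : a ⊆ g') (he : e ∈ E) (hea : Crosses e a)
    (heg : Crosses e g) (he' : e' ∈ E) (hea' : Crosses e' a) (heg' : Crosses e' g') : g = g' := by
  by_contra hne
  obtain ⟨x, hx⟩ := hea.nonempty
  have hmeet : ¬ Disjoint g g' := Set.not_disjoint_iff.2 ⟨x, hag hx, hag' hx⟩
  rcases hL (hK.subset hg) (hK.subset hg') with h | h | h
  · exact hmeet <|
      hK.disjoint hL hg hg' hne he' (hea'.of_subset_of_subset heg' hag h) heg'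
  · exact hmeet <| hK.disjoint hL hg hg' hne he heg (hea.of_subset_of_subset heg hag' h)
  · exact hmeet h

end IsLeaderSet

/-- The number of members of `K` containing both endpoints of `e`. When `e` crosses a set with
leader `g`, its parity records whether `e` crosses `g` as well. -/
noncomputable def depth (K : Set (Set V)) (e : Sym2 V) : ℕ :=
  {k ∈ K | ∀ v ∈ e, v ∈ k}.ncard

theorem IsLaminar.setOf_subset_eq (hL : IsLaminar L) (hKL : K ⊆ L) (ha : a ∈ L)
    (hea : Crosses e a) : {k ∈ K | a ⊆ k} =
      {k ∈ K | a ⊆ k ∧ Crosses e k} ∪ {k ∈ K | ∀ v ∈ e, v ∈ k} := by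
  obtain ⟨x, y, rfl, hx, hy⟩ := hea
  ext k
  simp only [Set.mem_ofPred_eq, Set.mem_union, crosses_mk, Sym2.mem_iff, forall_eq_or_imp,
    forall_eq]
  constructor
  · rintro ⟨hk, hak⟩
    have := hak hx
    tauto
  · rintro (⟨hk, hak, _⟩ | ⟨hk, hxk, hyk⟩)
    · exact ⟨hk, hak⟩
    · rcases hL ha (hKL hk) with h | h | h
      · exact ⟨hk, h⟩
      · exact absurd (h hyk) hy
      · exact absurd hxk (h.notMem_of_mem_left hx)

theorem depth_add_one_eq [Finite V] (hK : IsLeaderSet L E K) (hL : IsLaminar L) (ha : a ∈ L)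
    (he : e ∈ E) (hea : Crosses e a) (hg : g ∈ K) (hag : a ⊆ g) (heg : Crosses e g) :
    depth K e + 1 = {k ∈ K | a ⊆ k}.ncard := by
  have hsingle : {k ∈ K | a ⊆ k ∧ Crosses e k} = {g} := by
    ext k
    refine ⟨fun ⟨hk, hak, hek⟩ ↦ hK.leader_unique hL hk hg hak hag he hea hek he hea heg, ?_⟩
    rintro rfl
    exact ⟨hg, hag, heg⟩
  rw [hL.setOf_subset_eq hK.subset ha hea, hsingle, Set.singleton_union,
    Set.ncard_insert_of_notMem, depth]
  rintro ⟨-, hge⟩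
  obtain ⟨x, y, rfl, -, hy⟩ := heg
  exact hy (hge y (Sym2.mem_mk_right x y))

theorem depth_eq (hK : IsLeaderSet L E K) (hL : IsLaminar L) (ha : a ∈ L) (hea : Crosses e a)
    (h : ∀ k ∈ K, a ⊆ k → ¬ Crosses e k) : depth K e = {k ∈ K | a ⊆ k}.ncard := by
  have hempty : {k ∈ K | a ⊆ k ∧ Crosses e k} = ∅ :=
    Set.eq_empty_of_forall_notMem fun k hk ↦ h k hk.1 hk.2.1 hk.2.2
  rw [hL.setOf_subset_eq hK.subset ha hea, hempty, Set.empty_union, depth]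

theorem crosses_leader_of_bodd_depth_eq [Finite V] (hK : IsLeaderSet L E K) (hL : IsLaminar L)
    (ha : a ∈ L) (hg : g ∈ K) (hag : a ⊆ g) {e e' : Sym2 V} (he : e ∈ E) (hea : Crosses e a)
    (heg : Crosses e g) (he' : e' ∈ E) (hea' : Crosses e' a)
    (hdepth : (depth K e').bodd = (depth K e).bodd) : Crosses e' g := by
  by_contra heg'
  have h' : depth K e' = {k ∈ K | a ⊆ k}.ncard := depth_eq hK hL ha hea' fun k hk hak hek ↦
    heg' (hK.leader_unique hL hg hk hag hak he hea heg he' hea' hek ▸ hek)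
  rw [h', ← depth_add_one_eq hK hL ha he hea hg hag heg, Nat.bodd_succ] at hdepth
  simp at hdepth

theorem isLaminar_bundles (hL : IsLaminar L) {ι : Type*} {τ : Sym2 V → ι} {P : Set V → ι → Prop}
    (hP : ∀ e ∈ E, ∀ g ∈ K, ∀ g' ∈ K, Crosses e g → Crosses e g' → P g (τ e) → P g' (τ e) →
      g = g') :
    IsLaminar {S | ∃ a ∈ L, ∃ g ∈ K, a ⊆ g ∧ ∃ i, P g i ∧
      S = {e ∈ E | τ e = i ∧ Crosses e a ∧ Crosses e g}} := by
  rintro _ ⟨a, ha, g, hg, hag, i, hi, rfl⟩ _ ⟨b, hb, g', hg', hbg', j, hj, rfl⟩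
  by_contra! h
  obtain ⟨hab, hba, hmeet⟩ := h
  obtain ⟨e, ⟨he, rfl, hea, heg⟩, ⟨-, rfl, heb, heg'⟩⟩ := Set.not_disjoint_iff.1 hmeet
  obtain rfl := hP e he g hg g' hg' heg heg' hi hj
  rcases hL ha hb with h | h | h
  · exact hab fun e' ⟨he', hi', hea', heg'⟩ ↦
      ⟨he', hi', hea'.of_subset_of_subset heg' h hbg', heg'⟩
  · exact hba fun e' ⟨he', hi', heb', heg'⟩ ↦
      ⟨he', hi', heb'.of_subset_of_subset heg' h hag, heg'⟩
  · exact hea.disjoint_of_subset heb h hag hbg' heg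

theorem IsLeaderSet.exists_separating_index (hK : IsLeaderSet L E K) (hL : IsLaminar L)
    {ι : Type*} [Nonempty ι] {C : Set V → ι → Bool}
    (hC : ∀ a ∈ K, ∀ b ∈ K, a ≠ b → ∀ e ∈ E, Crosses e a → Crosses e b → C a ≠ C b) (e : Sym2 V)
    (he : e ∈ E) :
    ∃ i, ∀ a ∈ K, ∀ b ∈ K, Crosses e a → Crosses e b → C a i = C b i → a = b := by
  by_cases h : ∃ a ∈ K, ∃ b ∈ K, a ≠ b ∧ Crosses e a ∧ Crosses e b
  · obtain ⟨a, ha, b, hb, hab, hea, heb⟩ := h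
    obtain ⟨i, hi⟩ := Function.ne_iff.1 (hC a ha b hb hab e he hea heb)
    refine ⟨i, fun c hc d hd hec hed hcd ↦ ?_⟩
    rcases hK.eq_or_eq hL ha hb hc hab he hea heb hec with rfl | rfl <;>
      rcases hK.eq_or_eq hL ha hb hd hab he hea heb hed with rfl | rfl <;> simp_all
  · push Not at h
    exact ⟨Classical.arbitrary ι, fun a ha b hb hea heb _ ↦
      by_contra fun hab ↦ h a ha b hb hab hea heb⟩

theorem IsLeaderSet.exists_coloring [Finite V] (hK : IsLeaderSet L E K) (hL : IsLaminar L)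
    {ι : Type*} [Nonempty ι] {C : Set V → ι → Bool}
    (hC : ∀ a ∈ K, ∀ b ∈ K, a ≠ b → ∀ e ∈ E, Crosses e a → Crosses e b → C a ≠ C b) :
    ∃ φ : Sym2 V → (Bool × ι) × (Bool × ZMod 2 × ZMod 2), ∀ a ∈ L, (∃ e ∈ E, Crosses e a) →
      ∃ k, Odd {e ∈ E | Crosses e a ∧ φ e = k}.ncard := by
  choose! i hi using hK.exists_separating_index hL hC
  let τ (e : Sym2 V) : Bool × ι := ((depth K e).bodd, i e)
  have hlam (β : Bool) : IsLaminar {S | ∃ a ∈ L, ∃ g ∈ K, a ⊆ g ∧ ∃ t : Bool × ι, C g t.2 = β ∧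
      S = {e ∈ E | τ e = t ∧ Crosses e a ∧ Crosses e g}} :=
    isLaminar_bundles hL fun e he g hg g' hg' heg heg' h h' ↦
      hi e he g hg g' hg' heg heg' (h.trans h'.symm)
  obtain ⟨c, hc⟩ := exists_coloring_of_isLaminar (hlam false) (hlam true)
  refine ⟨fun e ↦ (τ e, c e), fun a ha hcross ↦ ?_⟩
  obtain ⟨g, hg, hag, e, he, hea, heg⟩ := hK.exists_leader ha hcross
  obtain ⟨k, hk⟩ := hc {e' ∈ E | τ e' = τ e ∧ Crosses e' a ∧ Crosses e' g} (by
    cases hβ : C g (τ e).2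
    · exact .inl ⟨a, ha, g, hg, hag, τ e, hβ, rfl⟩
    · exact .inr ⟨a, ha, g, hg, hag, τ e, hβ, rfl⟩) ⟨e, he, rfl, hea, heg⟩
  refine ⟨(τ e, k), ?_⟩
  convert hk using 2
  ext e'
  simp only [Set.mem_ofPred_eq, Prod.mk.injEq]
  constructor
  · rintro ⟨he', hea', hτ, rfl⟩
    exact ⟨⟨he', hτ, hea', crosses_leader_of_bodd_depth_eq hK hL ha hg hag he hea heg he' hea'
      (congrArg Prod.fst hτ)⟩, rfl⟩
  · rintro ⟨⟨he', hτ, hea', -⟩, rfl⟩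
    exact ⟨he', hea', hτ, rfl⟩

end Leaders

section Descendants

variable {V : Type*} {T : SimpleGraph V} {f g : Sym2 V} {u v w : V}

/-- The root of the component of `w`, an arbitrary but fixed vertex of that component. -/
noncomputable def componentRoot (T : SimpleGraph V) (w : V) : V :=
  (T.connectedComponentMk w).out

/-- The vertices that deleting `f` separates from the root of their component: the side of the
fundamental cut of a forest edge `f` that lies below `f`. -/
def descendants (T : SimpleGraph V) (f : Sym2 V) : Set V :=
  {w | ¬ (T.deleteEdges {f}).Reachable (componentRoot T w) w}

theorem reachable_componentRoot (T : SimpleGraph V) (w : V) : T.Reachable (componentRoot T w) w :=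
  SimpleGraph.ConnectedComponent.exact (Quot.out_eq _)

theorem componentRoot_eq (h : T.Reachable u v) : componentRoot T u = componentRoot T v :=
  congrArg Quot.out (SimpleGraph.ConnectedComponent.sound h)

theorem componentRoot_notMem_descendants : componentRoot T w ∉ descendants T f := by
  rw [descendants, Set.mem_ofPred_eq, not_not, componentRoot_eq (reachable_componentRoot T w)]

theorem mem_descendants_congr (h : (T.deleteEdges {f}).Reachable u v) :
    u ∈ descendants T f ↔ v ∈ descendants T f := by
  have hroot := componentRoot_eq (h.mono (T.deleteEdges_le _))
  rw [descendants, Set.mem_ofPred_eq, Set.mem_ofPred_eq, hroot]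
  exact not_congr ⟨fun hu ↦ hu.trans h, fun hv ↦ hv.trans h.symm⟩

theorem eq_of_crosses_descendants (hg : g ∈ T.edgeSet) (hcross : Crosses g (descendants T f)) :
    g = f := by
  by_contra hne
  obtain ⟨x, y, rfl, hx, hy⟩ := hcross
  have hadj : (T.deleteEdges {f}).Adj x y := T.deleteEdges_adj.2 ⟨hg, hne⟩
  exact hy ((mem_descendants_congr hadj.reachable).1 hx)

theorem reachable_deleteEdges_of_reachable {a b : V} (h : T.Reachable u w) :
    (T.deleteEdges {s(a, b)}).Reachable u w ∨ (T.deleteEdges {s(a, b)}).Reachable a w ∨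
      (T.deleteEdges {s(a, b)}).Reachable b w := by
  obtain ⟨p⟩ := h
  induction p with
  | nil => exact .inl (.refl _)
  | @cons u v w huv _ ih =>
    rcases ih with h | h
    · by_cases he : s(u, v) = s(a, b)
      · rcases Sym2.eq_iff.1 he with ⟨-, rfl⟩ | ⟨-, rfl⟩
        exacts [.inr (.inr h), .inr (.inl h)]
      · have hadj : (T.deleteEdges {s(a, b)}).Adj u v := T.deleteEdges_adj.2 ⟨huv, he⟩
        exact .inl (hadj.reachable.trans h)
    · exact .inr h

theorem exists_mem_descendants_iff (hT : T.IsAcyclic) (hf : f ∈ T.edgeSet) :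
    ∃ a b, f = s(a, b) ∧ b ∉ descendants T f ∧
      ∀ w, w ∈ descendants T f ↔ (T.deleteEdges {f}).Reachable a w := by
  obtain ⟨a, b, rfl, hb⟩ : ∃ a b, f = s(a, b) ∧ b ∉ descendants T f := by
    induction f with | h a b => ?_
    rcases reachable_deleteEdges_of_reachable (a := a) (b := b)
      (reachable_componentRoot T a).symm with h | h | h
    · exact ⟨b, a, Sym2.eq_swap, fun ha ↦ ha h.symm⟩
    · exact ⟨b, a, Sym2.eq_swap, fun ha ↦ ha h.symm⟩
    · exact ⟨a, b, rfl, fun hb ↦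
        componentRoot_notMem_descendants ((mem_descendants_congr h).1 hb)⟩
  have hab : ¬ (T.deleteEdges {s(a, b)}).Reachable a b :=
    SimpleGraph.isBridge_iff.1 (SimpleGraph.isAcyclic_iff_forall_isBridge.1 hT hf)
  have ha : a ∈ descendants T s(a, b) := fun ha ↦ by
    refine hab (ha.symm.trans ?_)
    rw [componentRoot_eq hf.reachable]
    exact not_not.1 hb
  refine ⟨a, b, rfl, hb, fun w ↦ ⟨fun hw ↦ ?_, fun h ↦ (mem_descendants_congr h).1 ha⟩⟩
  rcases reachable_deleteEdges_of_reachable (a := a) (b := b)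
    (reachable_componentRoot T w) with h | h | h
  · exact absurd h hw
  · exact h
  · exact absurd ((mem_descendants_congr h).2 hw) hb

theorem reachable_deleteEdges_iff_mem_descendants (hT : T.IsAcyclic) (hf : f ∈ T.edgeSet)
    (h : T.Reachable u v) :
    (T.deleteEdges {f}).Reachable u v ↔ (u ∈ descendants T f ↔ v ∈ descendants T f) := by
  refine ⟨mem_descendants_congr, fun huv ↦ ?_⟩
  by_cases hu : u ∈ descendants T f
  · obtain ⟨a, -, -, -, ha⟩ := exists_mem_descendants_iff hT hf
    exact ((ha u).1 hu).symm.trans ((ha v).1 (huv.1 hu))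
  · have hv := not_not.1 (hu ∘ huv.2)
    rw [← componentRoot_eq h] at hv
    exact (not_not.1 hu).symm.trans hv

theorem connected_induce_descendants (hT : T.IsAcyclic) (hf : f ∈ T.edgeSet) :
    (T.induce (descendants T f)).Connected := by
  obtain ⟨a, -, -, -, ha⟩ := exists_mem_descendants_iff hT hf
  have hsupp : descendants T f = ((T.deleteEdges {f}).connectedComponentMk a).supp := by
    ext w
    rw [ha, SimpleGraph.ConnectedComponent.mem_supp_iff, SimpleGraph.ConnectedComponent.eq]
    exact ⟨.symm, .symm⟩
  rw [hsupp]
  exact (SimpleGraph.ConnectedComponent.maximal_connected_induce_supp _).prop.mono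
    (SimpleGraph.comap_monotone _ (T.deleteEdges_le _))

/-- A trail from the root that enters the descendants of `f` has used `f` and cannot return. -/
theorem mem_descendants_of_mem_support {p : T.Walk (componentRoot T w) w} (hp : p.IsTrail)
    (hv : v ∈ p.support) (hvf : v ∈ descendants T f) : w ∈ descendants T f := by
  classical
  by_contra hw
  have hroot := componentRoot_eq (p.dropUntil v hv).reachable
  have hrv : ¬ (T.deleteEdges {f}).Reachable (componentRoot T w) v := hroot ▸ hvf
  have hvw : ¬ (T.deleteEdges {f}).Reachable v w := fun h ↦ hrv ((not_not.1 hw).trans h.symm)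
  exact hp.disjoint_edges_takeUntil_dropUntil hv
    ((p.takeUntil v hv).mem_edges_of_not_reachable_deleteEdges hrv)
    ((p.dropUntil v hv).mem_edges_of_not_reachable_deleteEdges hvw)

theorem exists_crosses_of_not_subset {S D : Set V} (hS : (T.induce S).Connected)
    (hSD : ¬ S ⊆ D) (hmeet : ¬ Disjoint S D) :
    ∃ x ∈ S, ∃ y ∈ S, T.Adj x y ∧ x ∈ D ∧ y ∉ D := by
  obtain ⟨x, hxS, hxD⟩ := Set.not_disjoint_iff.1 hmeet
  obtain ⟨y, hyS, hyD⟩ := Set.not_subset.1 hSD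
  obtain ⟨p⟩ := hS.preconnected ⟨x, hxS⟩ ⟨y, hyS⟩
  obtain ⟨d, -, hd, hd'⟩ := p.exists_boundary_dart (Subtype.val ⁻¹' D) hxD hyD
  exact ⟨d.fst, d.fst.2, d.snd, d.snd.2, d.adj, hd, hd'⟩

theorem isLaminar_descendants (hT : T.IsAcyclic) : IsLaminar (descendants T '' T.edgeSet) := by
  rintro _ ⟨f, hf, rfl⟩ _ ⟨g, hg, rfl⟩
  by_contra! h
  obtain ⟨hfg, hgf, hmeet⟩ := h
  obtain ⟨x, hxf, y, -, hxy, hxg, hyg⟩ :=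
    exists_crosses_of_not_subset (connected_induce_descendants hT hf) hfg hmeet
  obtain rfl := eq_of_crosses_descendants (T.mem_edgeSet.2 hxy) ⟨x, y, rfl, hxg, hyg⟩
  refine hgf fun z hz ↦ ?_
  obtain ⟨p, hp⟩ := (reachable_componentRoot T z).exists_isPath
  have hxyp : s(x, y) ∈ p.edges := p.mem_edges_of_not_reachable_deleteEdges hz
  exact mem_descendants_of_mem_support hp.isTrail (p.fst_mem_support_of_mem_edges hxyp) hxf

theorem exists_crosses_of_not_isBridge {G : SimpleGraph V} (hT : T.IsAcyclic) (hf : f ∈ T.edgeSet)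
    (hbridge : ¬ G.IsBridge f) : ∃ e ∈ G.edgeSet \ T.edgeSet, Crosses e (descendants T f) := by
  obtain ⟨a, b, rfl, hb, ha⟩ := exists_mem_descendants_iff hT hf
  rw [SimpleGraph.isBridge_iff, not_not] at hbridge
  obtain ⟨p⟩ := hbridge
  obtain ⟨d, -, hd, hd'⟩ := p.exists_boundary_dart (descendants T s(a, b)) ((ha a).2 (.refl a)) hb
  have hadj := d.adj
  rw [SimpleGraph.deleteEdges_adj] at hadj
  have hcross : Crosses s(d.fst, d.snd) (descendants T s(a, b)) := ⟨_, _, rfl, hd, hd'⟩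
  exact ⟨s(d.fst, d.snd), ⟨hadj.1, fun hdT ↦
    hadj.2 (eq_of_crosses_descendants hdT hcross)⟩, hcross⟩

end Descendants

theorem IsSpanningForest.mem_fundCut_iff {V : Type} {G T : SimpleGraph V}
    (h : IsSpanningForest G T) {e f : Sym2 V} (hf : f ∈ T.edgeSet) :
    e ∈ fundCut G T f ↔ e ∈ G.edgeSet ∧ Crosses e (descendants T f) := by
  refine and_congr_right fun he ↦ ?_
  have hsep {u v : V} (huv : G.Adj u v) : ¬ (T.deleteEdges {f}).Reachable u v ↔
      Crosses s(u, v) (descendants T f) := by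
    rw [reachable_deleteEdges_iff_mem_descendants h.2.1 hf ((h.2.2 u v).1 huv.reachable),
      crosses_mk]
  constructor
  · rintro ⟨u, v, rfl, huv⟩
    exact (hsep he).1 huv
  · intro hcross
    induction e with | h u v => exact ⟨u, v, rfl, (hsep he).2 hcross⟩

section CliqueMinor

theorem connected_induce_iUnion {W V : Type*} {H : SimpleGraph W} {G : SimpleGraph V}
    {X : W → Set V} (hX : ∀ w, (G.induce (X w)).Connected)
    (hadj : ∀ ⦃a b⦄, H.Adj a b → ∃ u ∈ X a, ∃ v ∈ X b, G.Adj u v) {S : Set W}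
    (hS : (H.induce S).Connected) : (G.induce (⋃ w ∈ S, X w)).Connected := by
  let U := ⋃ w ∈ S, X w
  have hsub {w : W} (hw : w ∈ S) : X w ⊆ U := Set.subset_biUnion_of_mem hw
  have hwithin {w : W} (hw : w ∈ S) {u v : V} (hu : u ∈ X w) (hv : v ∈ X w) :
      (G.induce U).Reachable ⟨u, hsub hw hu⟩ ⟨v, hsub hw hv⟩ :=
    ((hX w).preconnected ⟨u, hu⟩ ⟨v, hv⟩).map (SimpleGraph.induceHomOfLE G (hsub hw)).toHom
  have hbetween {a b : S} (p : (H.induce S).Walk a b) {u v : V} (hu : u ∈ X a) (hv : v ∈ X b) :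
      (G.induce U).Reachable ⟨u, hsub a.2 hu⟩ ⟨v, hsub b.2 hv⟩ := by
    induction p generalizing u with
    | @nil a => exact hwithin a.2 hu hv
    | @cons a c b hac _ ih =>
      obtain ⟨x, hx, y, hy, hxy⟩ := hadj hac
      have hstep : (G.induce U).Adj ⟨x, hsub a.2 hx⟩ ⟨y, hsub c.2 hy⟩ := hxy
      exact ((hwithin a.2 hu hx).trans hstep.reachable).trans (ih hy hv)
  obtain ⟨w, hw⟩ := hS.nonempty
  obtain ⟨u, hu⟩ := (hX w).nonempty
  refine (SimpleGraph.connected_iff_exists_forall_reachable _).2 ⟨⟨u, hsub hw hu⟩, ?_⟩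
  rintro ⟨v, hv⟩
  obtain ⟨w', hw', hv'⟩ := Set.mem_iUnion₂.1 hv
  obtain ⟨p⟩ := hS.preconnected ⟨w, hw⟩ ⟨w', hw'⟩
  exact hbetween p hu hv'

theorem exists_adj_iUnion {W V : Type*} {H : SimpleGraph W} {G : SimpleGraph V} {X : W → Set V}
    (hadj : ∀ ⦃a b⦄, H.Adj a b → ∃ u ∈ X a, ∃ v ∈ X b, G.Adj u v) {S S' : Set W}
    (h : ∃ a ∈ S, ∃ b ∈ S', H.Adj a b) :
    ∃ u ∈ ⋃ w ∈ S, X w, ∃ v ∈ ⋃ w ∈ S', X w, G.Adj u v := by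
  obtain ⟨a, ha, b, hb, hab⟩ := h
  obtain ⟨u, hu, v, hv, huv⟩ := hadj hab
  exact ⟨u, Set.mem_biUnion ha hu, v, Set.mem_biUnion hb hv, huv⟩

theorem connected_induce_of_walks {V : Type*} {G : SimpleGraph V} {B : Set V} {r : V} (hr : r ∈ B)
    (hB : ∀ w ∈ B, ∃ p : G.Walk r w, ∀ v ∈ p.support, v ∈ B) : (G.induce B).Connected := by
  refine G.induce_connected_of_patches r hr fun {w} hw ↦ ?_
  obtain ⟨p, hp⟩ := hB w hw
  exact ⟨{v | v ∈ p.support}, hp, p.start_mem_support, p.end_mem_support,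
    p.connected_induce_support.preconnected _ _⟩

theorem reachable_of_connected_of_adj {V ι : Type*} {G : SimpleGraph V} {S : ι → Set V}
    (hS : ∀ i, (G.induce (S i)).Connected)
    (hSadj : ∀ i j, i ≠ j → ∃ u ∈ S i, ∃ v ∈ S j, G.Adj u v) {i j : ι} {x y : V} (hx : x ∈ S i)
    (hy : y ∈ S j) : G.Reachable x y := by
  have hwithin {i : ι} {x y : V} (hx : x ∈ S i) (hy : y ∈ S i) : G.Reachable x y :=
    ((hS i).preconnected ⟨x, hx⟩ ⟨y, hy⟩).map (SimpleGraph.Embedding.induce (S i)).toHom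
  by_cases hij : i = j
  · subst hij
    exact hwithin hx hy
  · obtain ⟨u, hu, v, hv, huv⟩ := hSadj i j hij
    exact ((hwithin hx hu).trans huv.reachable).trans (hwithin hv hy)

theorem hasCliqueMinor_succ_of_connected {V : Type} {G : SimpleGraph V} {t : ℕ}
    {S : Fin t → Set V} {B : Set V} (hS : ∀ i, (G.induce (S i)).Connected)
    (hSS : Pairwise fun i j ↦ Disjoint (S i) (S j))
    (hSadj : ∀ i j, i ≠ j → ∃ u ∈ S i, ∃ v ∈ S j, G.Adj u v) (hB : (G.induce B).Connected)
    (hBS : ∀ i, Disjoint B (S i)) (hBadj : ∀ i, ∃ u ∈ B, ∃ v ∈ S i, G.Adj u v) :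
    HasCliqueMinor G (t + 1) := by
  have hconn (i : Fin (t + 1)) : (G.induce (Fin.cons (α := fun _ ↦ Set V) B S i)).Connected :=
    i.cases hB hS
  refine ⟨Fin.cons B S, fun i ↦ Set.nonempty_coe_sort.1 (hconn i).nonempty, ?_, hconn, ?_⟩
  · intro i j
    refine Fin.cases ?_ (fun i ↦ ?_) i <;> refine Fin.cases ?_ (fun j ↦ ?_) j
    · exact fun h ↦ absurd rfl h
    · exact fun _ ↦ hBS j
    · exact fun _ ↦ (hBS i).symm
    · exact fun h ↦ hSS fun hij ↦ h (congrArg _ hij)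
  · intro i j
    refine Fin.cases ?_ (fun i ↦ ?_) i <;> refine Fin.cases ?_ (fun j ↦ ?_) j
    · exact fun h ↦ absurd rfl h
    · exact fun _ ↦ hBadj j
    · intro _
      obtain ⟨u, hu, v, hv, huv⟩ := hBadj i
      exact ⟨v, hv, u, hu, huv.symm⟩
    · exact fun h ↦ hSadj i j fun hij ↦ h (congrArg _ hij)

end CliqueMinor

section LeaderGraph

variable {V : Type*} {L K : Set (Set V)} {E : Set (Sym2 V)}

/-- The graph on the leaders in which two of them are adjacent when an edge of `E` crosses both. -/
def leaderGraph (E : Set (Sym2 V)) (K : Set (Set V)) : SimpleGraph K where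
  Adj a b := a ≠ b ∧ ∃ e ∈ E, Crosses e a ∧ Crosses e b
  symm := ⟨fun _ _ ⟨hab, e, he, ha, hb⟩ ↦ ⟨hab.symm, e, he, hb, ha⟩⟩
  loopless := ⟨fun _ h ↦ h.1 rfl⟩

theorem IsLeaderSet.exists_mem_of_adj (hK : IsLeaderSet L E K) (hL : IsLaminar L) {a b : K}
    (hab : (leaderGraph E K).Adj a b) : Disjoint a.1 b.1 ∧ ∃ x ∈ a.1, ∃ y ∈ b.1, s(x, y) ∈ E := by
  obtain ⟨hne, e, he, hea, heb⟩ := hab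
  have hdisj := hK.disjoint hL a.2 b.2 (Subtype.coe_ne_coe.2 hne) he hea heb
  obtain ⟨x, y, rfl, hx, -⟩ := hea
  refine ⟨hdisj, x, hx, y, ?_, he⟩
  by_contra hyb
  exact crosses_mk.1 heb (by simp [hyb, hdisj.notMem_of_mem_left hx])

theorem IsLeaderSet.ssubset_of_reachable (hK : IsLeaderSet L E K) (hL : IsLaminar L) {a b : K}
    (hab : (leaderGraph E K).Reachable a b) {k : Set V} (hk : k ∈ K) (hak : a.1 ⊂ k) :
    b.1 ⊂ k := by
  obtain ⟨p⟩ := hab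
  induction p with
  | nil => exact hak
  | @cons a c _ hac _ ih =>
    refine ih ?_
    obtain ⟨hdisj, x, hx, y, hy, hxy⟩ := hK.exists_mem_of_adj hL hac
    have hcross : ¬ Crosses s(x, y) k := ((hK a).1 a.2).2 k hk hak _ hxy
      ⟨x, y, rfl, hx, hdisj.notMem_of_mem_right hy⟩
    have hyk : y ∈ k := by
      by_contra hyk
      exact hcross ⟨x, y, rfl, hak.subset hx, hyk⟩
    have hkc : ¬ k ⊆ c := fun h ↦ hdisj.notMem_of_mem_left hx (h (hak.subset hx))
    rcases hL (hK.subset c.2) (hK.subset hk) with h | h | h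
    · exact ⟨h, hkc⟩
    · exact absurd h hkc
    · exact absurd hyk (h.notMem_of_mem_left hy)

theorem IsLeaderSet.disjoint_of_reachable (hK : IsLeaderSet L E K) (hL : IsLaminar L) {a b : K}
    (hab : (leaderGraph E K).Reachable a b) (hne : a ≠ b) : Disjoint a.1 b.1 := by
  have hne' : a.1 ≠ b.1 := Subtype.coe_ne_coe.2 hne
  rcases hL (hK.subset a.2) (hK.subset b.2) with h | h | h
  · exact absurd (hK.ssubset_of_reachable hL hab b.2 (h.ssubset_of_ne hne')) (ssubset_irrefl _)
  · exact absurd (hK.ssubset_of_reachable hL hab.symm a.2 (h.ssubset_of_ne hne'.symm))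
      (ssubset_irrefl _)
  · exact h

end LeaderGraph

section LiftMinor

variable {V : Type} {G T : SimpleGraph V} {K : Set (Set V)}

/-- The part above the sets in `R` of the component of `T` with root `r`: it adds one more branch
set to a minor lifted from the leader graph. -/
def upperPart (T : SimpleGraph V) (R : Set (Set V)) (r : V) : Set V :=
  {w | componentRoot T w = r ∧ ∀ k ∈ R, w ∉ k}

theorem connected_induce_upperPart {R : Set (Set V)} (hR : R ⊆ descendants T '' T.edgeSet) (x : V) :
    (T.induce (upperPart T R (componentRoot T x))).Connected := by
  have hroot : componentRoot T (componentRoot T x) = componentRoot T x :=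
    componentRoot_eq (reachable_componentRoot T x)
  refine connected_induce_of_walks ⟨hroot, fun k hk ↦ ?_⟩ fun w ⟨hwx, hw⟩ ↦ ?_
  · obtain ⟨f, -, rfl⟩ := hR hk
    exact componentRoot_notMem_descendants
  · classical
    obtain ⟨p, hp⟩ := (reachable_componentRoot T w).exists_isPath
    rw [← hwx]
    refine ⟨p, fun v hv ↦ ⟨componentRoot_eq (p.dropUntil v hv).reachable, fun k hk hvk ↦ ?_⟩⟩
    obtain ⟨f, -, rfl⟩ := hR hk
    exact hw _ hk (mem_descendants_of_mem_support hp.isTrail hv hvk)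

theorem exists_adj_upperPart (hT : T.IsAcyclic) {R : Set (Set V)}
    (hR : R ⊆ descendants T '' T.edgeSet) (hdisj : R.Pairwise Disjoint) {k : Set V}
    (hk : k ∈ R) {x : V} (hx : x ∈ k) :
    ∃ u ∈ upperPart T R (componentRoot T x), ∃ v ∈ k, T.Adj u v := by
  obtain ⟨f, hf, rfl⟩ := hR hk
  obtain ⟨a, b, rfl, hb, ha⟩ := exists_mem_descendants_iff hT hf
  have hab : T.Adj a b := hf
  have hak := (ha a).2 (.refl a)
  have hax : T.Reachable a x := ((ha x).1 hx).mono (T.deleteEdges_le _)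
  refine ⟨b, ⟨componentRoot_eq (hab.symm.reachable.trans hax), fun k' hk' hbk' ↦ ?_⟩, a, hak,
    hab.symm⟩
  obtain ⟨g, -, rfl⟩ := hR hk'
  by_cases hkk' : descendants T s(a, b) = descendants T g
  · exact hb (hkk' ▸ hbk')
  · have hak' : a ∉ descendants T g := (hdisj hk hk' hkk').notMem_of_mem_left hak
    have := eq_of_crosses_descendants hf ⟨b, a, Sym2.eq_swap, hbk', hak'⟩
    exact hkk' (congrArg _ this)

theorem IsLeaderSet.connected_induce (hGT : IsSpanningForest G T) {E : Set (Sym2 V)}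
    (hK : IsLeaderSet (descendants T '' T.edgeSet) E K) {k : Set V} (hk : k ∈ K) :
    (G.induce k).Connected := by
  obtain ⟨f, hf, rfl⟩ := hK.subset hk
  exact (connected_induce_descendants hGT.2.1 hf).mono (SimpleGraph.comap_monotone _ hGT.1)

theorem IsLeaderSet.hasCliqueMinor_succ (hGT : IsSpanningForest G T)
    (hK : IsLeaderSet (descendants T '' T.edgeSet) (G.edgeSet \ T.edgeSet) K) {t : ℕ} (ht : t ≠ 0)
    (hminor : HasCliqueMinor (leaderGraph (G.edgeSet \ T.edgeSet) K) t) :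
    HasCliqueMinor G (t + 1) := by
  obtain ⟨S, hSne, hSdisj, hSconn, hSadj⟩ := hminor
  have hL := isLaminar_descendants hGT.2.1
  have hadj ⦃a b : K⦄ (hab : (leaderGraph (G.edgeSet \ T.edgeSet) K).Adj a b) :
      ∃ u ∈ a.1, ∃ v ∈ b.1, G.Adj u v := by
    obtain ⟨-, x, hx, y, hy, hxy⟩ := hK.exists_mem_of_adj hL hab
    exact ⟨x, hx, y, hy, hxy.1⟩
  have hconn (k : K) : (G.induce k.1).Connected := hK.connected_induce hGT k.2
  have hdisj {i j : Fin t} {a b : K} (ha : a ∈ S i) (hb : b ∈ S j) (hab : a ≠ b) :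
      Disjoint a.1 b.1 :=
    hK.disjoint_of_reachable hL (reachable_of_connected_of_adj hSconn hSadj ha hb) hab
  let X (i : Fin t) : Set V := ⋃ k ∈ S i, k.1
  have hXconn (i : Fin t) : (G.induce (X i)).Connected :=
    connected_induce_iUnion hconn hadj (hSconn i)
  have hXadj (i j : Fin t) (hij : i ≠ j) : ∃ u ∈ X i, ∃ v ∈ X j, G.Adj u v :=
    exists_adj_iUnion hadj (hSadj i j hij)
  have hXdisj : Pairwise fun i j ↦ Disjoint (X i) (X j) := fun i j hij ↦
    Set.disjoint_iUnion₂_left.2 fun a ha ↦ Set.disjoint_iUnion₂_right.2 fun b hb ↦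
      hdisj ha hb ((hSdisj hij).ne_of_mem ha hb)
  let R : Set (Set V) := {k | ∃ i, ∃ h : k ∈ K, ⟨k, h⟩ ∈ S i}
  have hR : R ⊆ descendants T '' T.edgeSet := fun k ⟨_, hk, _⟩ ↦ hK.subset hk
  have hRdisj : R.Pairwise Disjoint := fun a ⟨_, _, ha⟩ b ⟨_, _, hb⟩ hab ↦
    hdisj ha hb fun h ↦ hab (congrArg Subtype.val h)
  have : NeZero t := ⟨ht⟩
  obtain ⟨x₀, hx₀⟩ := (hXconn 0).nonempty
  refine hasCliqueMinor_succ_of_connected hXconn hXdisj hXadj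
    ((connected_induce_upperPart hR x₀).mono (SimpleGraph.comap_monotone _ hGT.1)) (fun i ↦ ?_)
    fun i ↦ ?_
  · exact Set.disjoint_iUnion₂_right.2 fun k hk ↦
      Set.disjoint_left.2 fun w hw ↦ hw.2 k ⟨i, k.2, hk⟩
  · obtain ⟨k, hk⟩ := hSne i
    obtain ⟨x, hx⟩ := (hconn k).nonempty
    have hxX : x ∈ X i := Set.mem_biUnion hk hx
    have hroot := (hGT.2.2 x x₀).1 (reachable_of_connected_of_adj hXconn hXadj hxX hx₀)
    obtain ⟨u, hu, v, hv, huv⟩ := exists_adj_upperPart hGT.2.1 hR hRdisj ⟨i, k.2, hk⟩ hx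
    exact ⟨u, componentRoot_eq hroot ▸ hu, v, Set.mem_biUnion hk hv, hGT.1 huv⟩

end LiftMinor

theorem StarArboricityLE.colorable {V : Type} {H : SimpleGraph V} {ℓ : ℕ}
    (h : StarArboricityLE H ℓ) : H.Colorable (2 ^ ℓ) := by
  obtain ⟨φ, hφ⟩ := h
  let c (i : Fin ℓ) := (hφ i).1.colorable_two.some
  let C : H.Coloring (Fin ℓ → Fin 2) := SimpleGraph.Coloring.mk (fun v i ↦ c i v) fun {u v} huv h ↦
    (c (φ s(u, v))).valid ((SimpleGraph.fromEdgeSet_adj _).2 ⟨⟨huv, rfl⟩, huv.ne⟩) (congrFun h _)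
  simpa using C.colorable

theorem IsSpanningForest.fundCut_diff_singleton {V : Type} {G T : SimpleGraph V}
    (h : IsSpanningForest G T) {f : Sym2 V} (hf : f ∈ T.edgeSet) :
    fundCut G T f \ {f} = {e ∈ G.edgeSet \ T.edgeSet | Crosses e (descendants T f)} := by
  ext e
  rw [Set.mem_sdiff, h.mem_fundCut_iff hf, Set.mem_singleton_iff]
  constructor
  · exact fun ⟨⟨heG, hcross⟩, hne⟩ ↦
      ⟨⟨heG, fun heT ↦ hne (eq_of_crosses_descendants heT hcross)⟩, hcross⟩
  · rintro ⟨⟨heG, heT⟩, hcross⟩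
    exact ⟨⟨heG, hcross⟩, fun hef ↦ heT (hef ▸ hf)⟩

theorem fundamental_cuts_coloring_general {t ℓ : ℕ} (ht : t ≠ 0) (hℓ : ℓ ≠ 0)
    (hcol : ∀ (W : Type) [Finite W] (H : SimpleGraph W),
      ¬ HasCliqueMinor H t → H.Colorable (2 ^ ℓ))
    {V : Type} [Finite V] {G T : SimpleGraph V} (hG : ¬ HasCliqueMinor G (t + 1))
    (hGT : IsSpanningForest G T) :
    ∃ φ : Sym2 V → Fin (16 * ℓ), ∀ f ∈ T.edgeSet, ¬ G.IsBridge f →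
      ∃ i, Odd {e | e ∈ fundCut G T f \ {f} ∧ φ e = i}.ncard := by
  obtain ⟨K, hK⟩ := exists_isLeaderSet (descendants T '' T.edgeSet) (G.edgeSet \ T.edgeSet)
  let C : (leaderGraph (G.edgeSet \ T.edgeSet) K).Coloring (Fin ℓ → Bool) :=
    (hcol K _ fun h ↦ hG (hK.hasCliqueMinor_succ hGT ht h)).toColoring (by simp)
  have hCK {k : Set V} (hk : k ∈ K) : Function.extend Subtype.val C default k = C ⟨k, hk⟩ :=
    Subtype.val_injective.extend_apply C default ⟨k, hk⟩
  have : NeZero ℓ := ⟨hℓ⟩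
  obtain ⟨φ, hφ⟩ := hK.exists_coloring (isLaminar_descendants hGT.2.1)
    (C := Function.extend Subtype.val C default) fun a ha b hb hab e he hea heb ↦ by
      rw [hCK ha, hCK hb]
      exact C.valid ⟨fun h ↦ hab (congrArg Subtype.val h), e, he, hea, heb⟩
  let colors : (Bool × Fin ℓ) × (Bool × ZMod 2 × ZMod 2) ≃ Fin (16 * ℓ) :=
    Fintype.equivFinOfCardEq (by simp; ring)
  refine ⟨colors ∘ φ, fun f hf hbridge ↦ ?_⟩
  obtain ⟨k, hk⟩ := hφ _ ⟨f, hf, rfl⟩ (exists_crosses_of_not_isBridge hGT.2.1 hf hbridge)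
  refine ⟨colors k, ?_⟩
  rw [hGT.fundCut_diff_singleton hf]
  simpa only [Set.mem_ofPred_eq, and_assoc, Function.comp_apply, colors.injective.eq_iff] using hk

/-- If every finite graph with no `K_{t-1}` minor has star-arboricity at most `ℓ`, then for
every finite graph `G` with no `K_t` minor and every spanning forest `T` of `G`, the
non-forest edges can be `(16ℓ+1)`-colored so that each non-bridge forest edge sees some
color an odd number of times on its fundamental cut (minus the edge itself). -/
theorem fundamental_cuts_coloring (t ℓ : ℕ) (ht : 3 ≤ t) (hℓ : 1 ≤ ℓ)
    (hstar : ∀ (W : Type) [Fintype W] (H : SimpleGraph W),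
      ¬ HasCliqueMinor H (t - 1) → StarArboricityLE H ℓ) :
    ∀ (V : Type) [Fintype V] (G T : SimpleGraph V),
      ¬ HasCliqueMinor G t → IsSpanningForest G T →
      ∃ φ : Sym2 V → Fin (16 * ℓ + 1),
        ∀ f ∈ T.edgeSet, ¬ G.IsBridge f →
          ∃ i : Fin (16 * ℓ + 1),
            Odd {e | e ∈ fundCut G T f \ {f} ∧ φ e = i}.ncard := by
  intro V _ G T hG hGT
  obtain ⟨t, rfl⟩ : ∃ k, t = k + 1 := ⟨t - 1, by lia⟩
  obtain ⟨φ, hφ⟩ := fundamental_cuts_coloring_general (by lia) (by lia)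
    (fun W _ H hH ↦ have := Fintype.ofFinite W; (hstar W H hH).colorable) hG hGT
  refine ⟨fun e ↦ (φ e).castSucc, fun f hf hbridge ↦ ?_⟩
  obtain ⟨i, hi⟩ := hφ f hf hbridge
  exact ⟨i.castSucc, by simpa only [Fin.castSucc_inj] using hi⟩
end

section
/- Every finite bipartite circle graph has odd chromatic number at most 98; that is, if G is a finite simple graph that is both bipartite and a circle graph, then χ_o(G) ≤ 98. -/
/-- `G` is a circle graph: vertices correspond to chords `(a v, b v)` of a circle with
`2n` points, all endpoints distinct, and adjacency is chord crossing. -/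
def IsCircleGraph {V : Type} (G : SimpleGraph V) : Prop :=
  ∃ (n : ℕ) (a b : V → ℕ),
    (∀ v, 1 ≤ a v ∧ a v < b v ∧ b v ≤ 2 * n) ∧
    Function.Injective (Sum.elim a b : V ⊕ V → ℕ) ∧
    ∀ u v : V, G.Adj u v ↔
      ((a u < a v ∧ a v < b u ∧ b u < b v) ∨ (a v < a u ∧ a u < b v ∧ b v < b u))

/-- `G` is bipartite: its vertex set splits into two parts with every edge across. -/
def IsBipartiteGraph {V : Type} (G : SimpleGraph V) : Prop :=
  ∃ X : Set V, ∀ u v : V, G.Adj u v → (u ∈ X ↔ v ∉ X)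

/-!
Let `X` and `Xᶜ` be the two sides of the bipartition, so that the chords of either side are pairwise
noncrossing. The chords of `X` cut the disk into regions; a chord of `Xᶜ` joins the regions of its
two endpoints, and its neighbours are exactly the chords of `X` that separate these regions. The
graph so induced on the regions is sparse: listing the regions along the circle gives a word without
an `abab` pattern, hence with at most twice as many runs as regions, and noncrossing chords join at
most twice as many pairs of runs as there are runs. So the region graph is 8-degenerate and has a
proper coloring `g` with 9 colors.

Color a chord of `X` by the unordered pair of the `g`-colors of the two regions it borders, read as
`e i + e j` in `(ZMod 2)⁹`. Along a path of regions these sums telescope, so the sum over the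
neighbours of a chord `y` of `Xᶜ` is `e i + e j`, where `i ≠ j` are the `g`-colors of the regions
that `y` joins. The sum is nonzero, so some color occurs an odd number of times. The two sides
together use `2 * (10.choose 2) = 90` colors.
-/

theorem ncard_union_le_of_injOn {α β : Type*} [Finite β] {s t : Set α} {f g : α → β}
    (hf : Set.InjOn f s) (hg : Set.InjOn g t) : (s ∪ t).ncard ≤ 2 * Nat.card β :=
  calc (s ∪ t).ncard ≤ s.ncard + t.ncard := Set.ncard_union_le _ _
    _ = (f '' s).ncard + (g '' t).ncard := by rw [hf.ncard_image, hg.ncard_image]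
    _ ≤ Nat.card β + Nat.card β := add_le_add (Set.ncard_le_card _) (Set.ncard_le_card _)
    _ = 2 * Nat.card β := (two_mul _).symm

section EdgeCount

variable {V : Type*} [Finite V] {G : SimpleGraph V} {k : ℕ}

theorem ncard_edgeSet_map_le {W : Type*} (G : SimpleGraph V) (f : V → W) :
    (G.map f).edgeSet.ncard ≤ G.edgeSet.ncard := by
  have hsub : (G.map f).edgeSet ⊆ Sym2.map f '' G.edgeSet := by
    intro e
    induction e with | _ x y
    rintro ⟨-, u, v, huv, rfl, rfl⟩
    exact ⟨s(u, v), huv, rfl⟩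
  exact (Set.ncard_le_ncard hsub).trans Set.ncard_image_le

theorem exists_ncard_neighborSet_le_of_ncard_edgeSet_le [Nonempty V]
    (h : G.edgeSet.ncard ≤ k * Nat.card V) : ∃ v, (G.neighborSet v).ncard ≤ 2 * k := by
  classical
  have := Fintype.ofFinite V
  by_contra! hlarge
  have hsum : ∑ _v : V, (2 * k + 1) ≤ ∑ v, G.degree v := by
    refine Finset.sum_le_sum fun v _ ↦ ?_
    rw [← G.card_neighborSet_eq_degree, ← Nat.card_eq_fintype_card]
    exact hlarge v
  rw [G.sum_degrees_eq_twice_card_edges, ← Set.ncard_coe_finset, G.coe_edgeFinset,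
    Finset.sum_const, Finset.card_univ, ← Nat.card_eq_fintype_card, smul_eq_mul] at hsum
  have : 0 < Nat.card V := Nat.card_pos
  linarith

theorem exists_coloring_on_of_degenerate
    (h : ∀ S : Set V, S.Nonempty → ∃ v ∈ S, (G.neighborSet v ∩ S).ncard ≤ k) (S : Set V) :
    ∃ g : V → Fin (k + 1), ∀ u ∈ S, ∀ v ∈ S, G.Adj u v → g u ≠ g v := by
  classical
  induction S using WellFoundedLT.induction with
  | ind S ih =>
    rcases S.eq_empty_or_nonempty with rfl | hS
    · exact ⟨fun _ ↦ 0, by simp⟩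
    obtain ⟨x, hxS, hdeg⟩ := h S hS
    obtain ⟨g, hg⟩ := ih (S \ {x}) (Set.sdiff_singleton_ssubset.2 hxS)
    obtain ⟨i, hi⟩ : ∃ i, i ∉ g '' (G.neighborSet x ∩ S) := by
      by_contra! hall
      have hle := (Set.ncard_image_le (f := g)).trans hdeg
      rw [Set.eq_univ_of_forall hall, Set.ncard_univ, Nat.card_fin] at hle
      omega
    have hfree : ∀ y ∈ S, G.Adj x y → g y ≠ i := fun y hy hxy hgy ↦ hi ⟨y, ⟨hxy, hy⟩, hgy⟩
    refine ⟨Function.update g x i, fun u hu v hv huv ↦ ?_⟩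
    rcases eq_or_ne u x with rfl | hux
    · rw [Function.update_self, Function.update_of_ne huv.ne']
      exact (hfree v hv huv).symm
    rcases eq_or_ne v x with rfl | hvx
    · rw [Function.update_self, Function.update_of_ne hux]
      exact hfree u hu huv.symm
    rw [Function.update_of_ne hux, Function.update_of_ne hvx]
    exact hg u ⟨hu, hux⟩ v ⟨hv, hvx⟩ huv

theorem colorable_of_ncard_edgeSet_induce_le
    (h : ∀ S : Set V, (G.induce S).edgeSet.ncard ≤ k * S.ncard) : G.Colorable (2 * k + 1) := by
  obtain ⟨g, hg⟩ := exists_coloring_on_of_degenerate (G := G) (k := 2 * k) (fun S hS ↦ by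
    have := hS.to_subtype
    obtain ⟨v, hv⟩ := exists_ncard_neighborSet_le_of_ncard_edgeSet_le (h S)
    have himage : Subtype.val '' (G.induce S).neighborSet v = G.neighborSet v ∩ S := by
      ext; simp
    refine ⟨v, v.2, ?_⟩
    rwa [← himage, Set.ncard_image_of_injective _ Subtype.val_injective]) Set.univ
  exact ⟨g, fun huv ↦ hg _ trivial _ trivial huv⟩

end EdgeCount

section Noncrossing

variable {α β L : Type*} [LinearOrder α] [LinearOrder β]

/-- A graph on a linear order is noncrossing if its edges, drawn as arcs in the upper half plane
over the line, do not cross. -/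
def IsNoncrossing (C : SimpleGraph α) : Prop :=
  ∀ ⦃p q s t⦄, p < q → q < s → s < t → C.Adj p s → ¬ C.Adj q t

/-- A labelling of a linear order is noncrossing if, read as a word, it has no subsequence `xyxy`
with `x ≠ y`; equivalently, its fibers form a noncrossing partition. -/
def IsNoncrossingLabelling (w : α → L) : Prop :=
  ∀ ⦃p q s t⦄, p < q → q < s → s < t → w p = w s → w q = w t → w p = w q

theorem IsNoncrossing.map {C : SimpleGraph α} (hC : IsNoncrossing C) {ρ : α → β}
    (hρ : Monotone ρ) : IsNoncrossing (C.map ρ) := by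
  rintro _ _ _ _ hpq hqs hst ⟨-, p, s, hps, rfl, rfl⟩ ⟨-, q, t, hqt, rfl, rfl⟩
  exact hC (hρ.reflect_lt hpq) (hρ.reflect_lt hqs) (hρ.reflect_lt hst) hps hqt

theorem IsNoncrossing.comap {C : SimpleGraph β} (hC : IsNoncrossing C) {f : α → β}
    (hf : StrictMono f) : IsNoncrossing (C.comap f) :=
  fun _ _ _ _ hpq hqs hst hps hqt ↦ hC (hf hpq) (hf hqs) (hf hst) hps hqt

theorem IsNoncrossing.ncard_edgeSet_le [Finite α] {C : SimpleGraph α} (hC : IsNoncrossing C) :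
    C.edgeSet.ncard ≤ 2 * Nat.card α := by
  -- An edge is charged to its left endpoint if it is the longest one there, and to its right
  -- endpoint otherwise: two edges `(p, s)`, `(q, s)` with `p < q` both charged to `s` would make
  -- `(p, s)` cross a longer edge at `q`.
  let longest : Set (α × α) := {e | e.1 < e.2 ∧ C.Adj e.1 e.2 ∧ ∀ t, e.2 < t → ¬ C.Adj e.1 t}
  let shorter : Set (α × α) := {e | e.1 < e.2 ∧ C.Adj e.1 e.2 ∧ ∃ t, e.2 < t ∧ C.Adj e.1 t}
  have hcover : C.edgeSet ⊆ (fun e : α × α ↦ s(e.1, e.2)) '' (longest ∪ shorter) := by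
    have hmem : ∀ p s, p < s → C.Adj p s → (p, s) ∈ longest ∪ shorter := by
      intro p s hps hadj
      by_cases h : ∃ t, s < t ∧ C.Adj p t
      · exact Or.inr ⟨hps, hadj, h⟩
      · push Not at h
        exact Or.inl ⟨hps, hadj, h⟩
    intro e
    induction e with | _ p s
    intro hadj
    rcases hadj.ne.lt_or_gt with h | h
    · exact ⟨(p, s), hmem p s h hadj, rfl⟩
    · exact ⟨(s, p), hmem s p h hadj.symm, Sym2.eq_swap⟩
  have hlongest : Set.InjOn Prod.fst longest := by
    rintro ⟨p, s⟩ ⟨-, hs, hs_max⟩ ⟨_, t⟩ ⟨-, ht, ht_max⟩ rfl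
    refine Prod.ext rfl (le_antisymm ?_ ?_)
    · exact not_lt.1 fun hlt ↦ ht_max s hlt hs
    · exact not_lt.1 fun hlt ↦ hs_max t hlt ht
  have hshorter : Set.InjOn Prod.snd shorter := by
    rintro ⟨p, s⟩ ⟨hps, hp, t, hst, hpt⟩ ⟨q, _⟩ ⟨hqs, hq, t', hst', hqt'⟩ rfl
    refine Prod.ext (le_antisymm ?_ ?_) rfl
    · exact not_lt.1 fun hlt ↦ hC hlt hps hst hq hpt
    · exact not_lt.1 fun hlt ↦ hC hlt hqs hst' hp hqt'
  calc C.edgeSet.ncard ≤ (longest ∪ shorter).ncard :=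
        (Set.ncard_le_ncard hcover).trans Set.ncard_image_le
    _ ≤ 2 * Nat.card α := ncard_union_le_of_injOn hlongest hshorter

section Runs

variable [WellFoundedLT α] (w : α → L)

/-- The first point of the run (maximal constant interval) of the labelling `w` containing `p`. -/
noncomputable def runStart (p : α) : α :=
  wellFounded_lt.min {q | q ≤ p ∧ ∀ s ∈ Set.Icc q p, w s = w p}
    ⟨p, le_rfl, fun _ hs ↦ congrArg w (le_antisymm hs.2 hs.1)⟩

theorem isLeast_runStart (p : α) :
    IsLeast {q | q ≤ p ∧ ∀ s ∈ Set.Icc q p, w s = w p} (runStart w p) :=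
  ⟨wellFounded_lt.min_mem _ _, fun _ hq ↦ wellFounded_lt.min_le hq⟩

theorem apply_runStart (p : α) : w (runStart w p) = w p :=
  have ⟨hle, hconst⟩ := (isLeast_runStart w p).1
  hconst _ ⟨le_rfl, hle⟩

theorem monotone_runStart : Monotone (runStart w) := by
  intro p q hpq
  obtain ⟨⟨hp, -⟩, hp_least⟩ := isLeast_runStart w p
  obtain ⟨-, hconst⟩ := (isLeast_runStart w q).1
  rcases le_total (runStart w q) p with h | h
  · refine hp_least ⟨h, fun s hs ↦ ?_⟩
    rw [hconst s ⟨hs.1, hs.2.trans hpq⟩, hconst p ⟨h, hpq⟩]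
  · exact hp.trans h

theorem apply_ne_of_covBy_runStart {m p : α} (h : m ⋖ runStart w p) :
    w m ≠ w (runStart w p) := by
  obtain ⟨⟨hle, hconst⟩, hleast⟩ := isLeast_runStart w p
  intro heq
  refine h.lt.not_ge (hleast ⟨h.le.trans hle, fun s hs ↦ ?_⟩)
  rcases hs.1.eq_or_lt with rfl | hlt
  · exact heq.trans (apply_runStart w p)
  · exact hconst s ⟨h.ge_of_gt hlt, hs.2⟩

end Runs

theorem IsNoncrossingLabelling.ncard_range_runStart_le [Finite α] [Finite L] {w : α → L}
    (hw : IsNoncrossingLabelling w) : (Set.range (runStart w)).ncard ≤ 2 * Nat.card L := by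
  -- A run is charged to its own label if that label is new, and otherwise to the label of the run
  -- just before it.
  let fresh : Set α := {p | ∀ s < p, w s ≠ w p}
  let repeated : Set α := {p | (∃ s < p, w s = w p) ∧ ∃ m, m ⋖ p ∧ w m ≠ w p}
  have hcover : Set.range (runStart w) ⊆ fresh ∪ repeated := by
    rintro _ ⟨p, rfl⟩
    by_cases h : ∃ s < runStart w p, w s = w (runStart w p)
    · have ⟨s, hs, _⟩ := h
      obtain ⟨m, -, hm⟩ := exists_le_covBy_of_lt hs
      exact Or.inr ⟨h, m, hm, apply_ne_of_covBy_runStart w hm⟩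
    · push Not at h
      exact Or.inl h
  have hfresh : Set.InjOn w fresh := by
    intro p hp q hq hpq
    exact le_antisymm (not_lt.1 fun h ↦ hp q h hpq.symm) (not_lt.1 fun h ↦ hq p h hpq)
  choose! pred hpred hpred_ne using fun p (hp : p ∈ repeated) ↦ hp.2
  have hrepeated_ne : ∀ p ∈ repeated, ∀ q ∈ repeated, p < q → w (pred p) ≠ w (pred q) := by
    intro p hp q hq hpq heq
    obtain ⟨s, hsp, hs⟩ := hp.1
    have hs_pred : s < pred p :=
      ((hpred p hp).le_of_lt hsp).lt_of_ne fun h ↦ hpred_ne p hp (h ▸ hs)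
    have hp_pred : p < pred q :=
      ((hpred q hq).le_of_lt hpq).lt_of_ne fun h ↦ hpred_ne p hp (heq.trans (h ▸ rfl))
    exact hpred_ne p hp ((hw hs_pred (hpred p hp).lt hp_pred hs heq).symm.trans hs)
  have hrepeated : Set.InjOn (w ∘ pred) repeated := by
    intro p hp q hq heq
    by_contra hne
    rcases lt_or_gt_of_ne hne with h | h
    · exact hrepeated_ne p hp q hq h heq
    · exact hrepeated_ne q hq p hp h heq.symm
  exact (Set.ncard_le_ncard hcover).trans (ncard_union_le_of_injOn hfresh hrepeated)

theorem IsNoncrossing.ncard_edgeSet_map_le_four_mul [Finite α] [Finite L] {C : SimpleGraph α}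
    (hC : IsNoncrossing C) {w : α → L} (hw : IsNoncrossingLabelling w) :
    (C.map w).edgeSet.ncard ≤ 4 * Nat.card L := by
  let toRun : α → Set.range (runStart w) := Set.rangeFactorization (runStart w)
  have hfactor : (C.map toRun).map (w ∘ Subtype.val) = C.map w := by
    rw [SimpleGraph.map_map]
    exact congrArg C.map (funext (apply_runStart w))
  have hruns : IsNoncrossing (C.map toRun) :=
    hC.map fun _ _ hpq ↦ monotone_runStart w hpq
  calc (C.map w).edgeSet.ncard ≤ (C.map toRun).edgeSet.ncard :=
        hfactor ▸ ncard_edgeSet_map_le _ _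
    _ ≤ 2 * (Set.range (runStart w)).ncard := hruns.ncard_edgeSet_le
    _ ≤ 2 * (2 * Nat.card L) := Nat.mul_le_mul_left 2 hw.ncard_range_runStart_le
    _ = 4 * Nat.card L := by ring

theorem IsNoncrossing.colorable_map [Finite α] [Finite L] {C : SimpleGraph α}
    (hC : IsNoncrossing C) {w : α → L} (hw : IsNoncrossingLabelling w) :
    (C.map w).Colorable 9 := by
  refine colorable_of_ncard_edgeSet_induce_le (k := 4) fun S ↦ ?_
  have hrestrict : (C.map w).induce S ≤ (C.induce (w ⁻¹' S)).map (S.restrictPreimage w) := by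
    rintro ⟨_, hp⟩ ⟨_, hq⟩ ⟨hne, p, q, hpq, rfl, rfl⟩
    exact ⟨fun h ↦ hne (congrArg Subtype.val h), ⟨p, hp⟩, ⟨q, hq⟩, hpq, rfl, rfl⟩
  have hwS : IsNoncrossingLabelling (S.restrictPreimage w) :=
    fun p q s t hpq hqs hst hps hqt ↦ Subtype.ext <|
      @hw p q s t hpq hqs hst (congrArg Subtype.val hps) (congrArg Subtype.val hqt)
  have hCS : IsNoncrossing (C.induce (w ⁻¹' S)) := hC.comap (Subtype.strictMono_coe _)
  exact (Set.ncard_le_ncard (SimpleGraph.edgeSet_mono hrestrict)).trans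
    (hCS.ncard_edgeSet_map_le_four_mul hwS)

end Noncrossing

section OddColoring

variable {V κ κ' : Type*} {G : SimpleGraph V} {c : V → κ}

/-- Some color of `c` appears an odd number of times on the neighborhood of `v`. -/
def HasOddColor (G : SimpleGraph V) (c : V → κ) (v : V) : Prop :=
  ∃ i, Odd {u | u ∈ G.neighborSet v ∧ c u = i}.ncard

/-- Odd colorings of a graph, with colors in `κ`. -/
def IsOddColoring (G : SimpleGraph V) (c : V → κ) : Prop :=
  (∀ u v, G.Adj u v → c u ≠ c v) ∧ ∀ v, (G.neighborSet v).Nonempty → HasOddColor G c v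

theorem IsOddColoring.comp_embedding (hc : IsOddColoring G c) (f : κ ↪ κ') :
    IsOddColoring G (f ∘ c) := by
  refine ⟨fun u v huv ↦ f.injective.ne (hc.1 u v huv), fun v hv ↦ ?_⟩
  obtain ⟨i, hi⟩ := hc.2 v hv
  exact ⟨f i, by simpa only [Function.comp_apply, f.apply_eq_iff_eq] using hi⟩

theorem isOddColoring_of_sides {side : V → Bool} (hside : ∀ u v, G.Adj u v → side u ≠ side v)
    {c : Bool → V → κ}
    (hc : ∀ v, (G.neighborSet v).Nonempty → HasOddColor G (c (!side v)) v) :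
    IsOddColoring G fun v ↦ (side v, c (side v) v) := by
  refine ⟨fun u v huv h ↦ hside u v huv (Prod.ext_iff.1 h).1, fun v hv ↦ ?_⟩
  obtain ⟨i, hi⟩ := hc v hv
  have hfiber : {u | u ∈ G.neighborSet v ∧ (side u, c (side u) u) = (!side v, i)} =
      {u | u ∈ G.neighborSet v ∧ c (!side v) u = i} := by
    ext u
    refine and_congr_right fun huv ↦ ?_
    have hu : side u = !side v := Bool.eq_not.2 (hside v u huv).symm
    rw [hu, Prod.mk.injEq, eq_self, true_and]
  exact ⟨(!side v, i), hfiber ▸ hi⟩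

end OddColoring

section CharacteristicTwo

variable {ι κ M : Type*} [AddCommGroup M] [Module (ZMod 2) M]

theorem sum_symmDiff_eq_add_of_charTwo [DecidableEq ι] (s t : Finset ι) (f : ι → M) :
    ∑ x ∈ symmDiff s t, f x = ∑ x ∈ s, f x + ∑ x ∈ t, f x := by
  rw [symmDiff_def, Finset.sup_eq_union, Finset.sum_union disjoint_sdiff_sdiff,
    ← Finset.sum_inter_add_sum_sdiff s t, ← Finset.sum_inter_add_sum_sdiff t s,
    Finset.inter_comm t s, add_comm (∑ x ∈ s ∩ t, f x), ZModModule.add_add_add_cancel]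

theorem exists_odd_card_fiber_of_sum_ne_zero [DecidableEq κ] {s : Finset ι} {c : ι → κ}
    {f : κ → M} (h : ∑ x ∈ s, f (c x) ≠ 0) : ∃ i, Odd {x ∈ s | c x = i}.card := by
  by_contra! heven
  refine h ?_
  rw [Finset.sum_comp]
  refine Finset.sum_eq_zero fun i _ ↦ ?_
  obtain ⟨m, hm⟩ := Nat.not_odd_iff_even.1 (heven i)
  rw [hm, add_nsmul, ZModModule.add_self]

variable [DecidableEq κ]

/-- The vector `e i + e j` over `ZMod 2` of an unordered pair of colors `s(i, j)`. -/
def pairVector : Sym2 κ → κ → ZMod 2 :=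
  Sym2.lift ⟨fun i j ↦ Pi.single i 1 + Pi.single j 1, fun _ _ ↦ add_comm _ _⟩

theorem pairVector_mk (i j : κ) : pairVector s(i, j) = Pi.single i 1 - Pi.single j 1 :=
  (ZModModule.sub_eq_add _ _).symm

theorem pairVector_mk_ne_zero {i j : κ} (h : i ≠ j) : pairVector s(i, j) ≠ 0 := by
  intro hzero
  have := congrFun hzero i
  simp [pairVector_mk, h] at this

end CharacteristicTwo

/-- A system of chords with distinct endpoints in a linear order, the circle being cut open at a
point. -/
structure ChordDiagram (V α : Type*) [LinearOrder α] where
  left : V → α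
  right : V → α
  left_lt_right : ∀ v, left v < right v
  injective_elim : Function.Injective (Sum.elim left right)

namespace ChordDiagram

variable {V α κ : Type*} [LinearOrder α] (D : ChordDiagram V α)

theorem left_injective : Function.Injective D.left :=
  fun _ _ h ↦ Sum.inl_injective (D.injective_elim h)

theorem right_injective : Function.Injective D.right :=
  fun _ _ h ↦ Sum.inr_injective (D.injective_elim h)

/-- The circle graph of a chord diagram: adjacency is crossing of chords. -/
def crossingGraph : SimpleGraph V where
  Adj u v := (D.left u < D.left v ∧ D.left v < D.right u ∧ D.right u < D.right v) ∨
    (D.left v < D.left u ∧ D.left u < D.right v ∧ D.right v < D.right u)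
  symm := ⟨fun _ _ ↦ Or.symm⟩
  loopless := ⟨fun _ ↦ by simp⟩

/-- The graph on the points whose edges are the chords in `Y`. -/
def chordGraph (Y : Set V) : SimpleGraph α :=
  SimpleGraph.fromEdgeSet ((fun y ↦ s(D.left y, D.right y)) '' Y)

/-- The chords in `X` that lie above the point `p`. This set identifies the region, of those into
which the chords in `X` cut the disk, whose boundary contains `p`. -/
def region (X : Finset V) (p : α) : Finset V :=
  {x ∈ X | D.left x < p ∧ p < D.right x}

variable {D} {X : Finset V} {Y : Set V}

theorem mem_region {x : V} {p : α} :
    x ∈ D.region X p ↔ x ∈ X ∧ D.left x < p ∧ p < D.right x :=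
  Finset.mem_filter

theorem chordGraph_adj_of_lt {p q : α} (hpq : p < q) :
    (D.chordGraph Y).Adj p q ↔ ∃ y ∈ Y, D.left y = p ∧ D.right y = q := by
  simp only [chordGraph, SimpleGraph.fromEdgeSet_adj, Set.mem_image, Sym2.eq_iff]
  constructor
  · rintro ⟨⟨y, hy, h | ⟨rfl, rfl⟩⟩, -⟩
    · exact ⟨y, hy, h⟩
    · exact absurd hpq (D.left_lt_right y).not_gt
  · rintro ⟨y, hy, h⟩
    exact ⟨⟨y, hy, Or.inl h⟩, hpq.ne⟩

theorem isNoncrossing_chordGraph (hY : D.crossingGraph.IsIndepSet Y) :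
    IsNoncrossing (D.chordGraph Y) := by
  intro p q s t hpq hqs hst hps hqt
  obtain ⟨u, hu, rfl, rfl⟩ := (chordGraph_adj_of_lt (hpq.trans hqs)).1 hps
  obtain ⟨v, hv, rfl, rfl⟩ := (chordGraph_adj_of_lt (hqs.trans hst)).1 hqt
  exact hY hu hv (fun h ↦ hpq.ne (congrArg D.left h)) (Or.inl ⟨hpq, hqs, hst⟩)

theorem isNoncrossingLabelling_region : IsNoncrossingLabelling (D.region X) := by
  intro p q s t hpq hqs hst hps hqt
  ext x
  have hps := Finset.ext_iff.1 hps x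
  have hqt := Finset.ext_iff.1 hqt x
  simp only [mem_region] at hps hqt ⊢
  constructor
  · intro hp
    exact ⟨hp.1, hp.2.1.trans hpq, hqs.trans (hps.1 hp).2.2⟩
  · intro hq
    exact hps.2 ⟨hq.1, hq.2.1.trans hqs, hst.trans (hqt.1 hq).2.2⟩

theorem crossingGraph_adj_iff_xor {x y : V} : D.crossingGraph.Adj y x ↔
    Xor (D.left x < D.left y ∧ D.left y < D.right x)
      (D.left x < D.right y ∧ D.right y < D.right x) := by
  have hx := D.left_lt_right x
  have hy := D.left_lt_right y
  rcases eq_or_ne x y with rfl | hne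
  · simp
  have hleft := D.left_injective.ne hne
  have hright := D.right_injective.ne hne
  simp only [crossingGraph, Xor]
  grind

section DecidableEq

variable [DecidableEq V]

theorem neighborSet_eq_symmDiff_region {y : V} (hy : D.crossingGraph.neighborSet y ⊆ X) :
    D.crossingGraph.neighborSet y =
      ↑(symmDiff (D.region X (D.left y)) (D.region X (D.right y))) := by
  ext x
  have hadj : D.crossingGraph.Adj y x → x ∈ X := fun h ↦ hy h
  rw [crossingGraph_adj_iff_xor] at hadj
  simp only [SimpleGraph.mem_neighborSet, crossingGraph_adj_iff_xor, Finset.mem_coe,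
    Finset.mem_symmDiff, mem_region, Xor] at hadj ⊢
  tauto

theorem exists_region_eq_insert (hX : D.crossingGraph.IsIndepSet X) {p : α}
    (hp : (D.region X p).Nonempty) :
    ∃ x, x ∉ D.region X (D.left x) ∧ D.region X p = insert x (D.region X (D.left x)) := by
  obtain ⟨x, hx, hmax⟩ := Finset.exists_max_image _ D.left hp
  obtain ⟨hxX, hxp, hpx⟩ := mem_region.1 hx
  refine ⟨x, fun h ↦ (mem_region.1 h).2.1.false, ?_⟩
  ext z
  rw [Finset.mem_insert, mem_region, mem_region]
  constructor
  · rintro ⟨hzX, hzp, hpz⟩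
    have hle := hmax z (mem_region.2 ⟨hzX, hzp, hpz⟩)
    rcases hle.eq_or_lt with heq | hlt
    · exact Or.inl (D.left_injective heq)
    · exact Or.inr ⟨hzX, hlt, hxp.trans hpz⟩
  · rintro (rfl | ⟨hzX, hzx, hxz⟩)
    · exact ⟨hxX, hxp, hpx⟩
    · have hne : z ≠ x := fun h ↦ hzx.ne (congrArg D.left h)
      have hle : D.right x ≤ D.right z :=
        not_lt.1 fun hlt ↦ hX hzX hxX hne (Or.inl ⟨hzx, hxz, hlt⟩)
      exact ⟨hzX, hzx.trans hxp, hpx.trans_le hle⟩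

/-- The chords of `X` above `p` are those crossed on the way from the outer region to the region of
`p`, so the differences of `f` across them telescope. -/
theorem sum_region_sub {M : Type*} [AddCommGroup M] (hX : D.crossingGraph.IsIndepSet X)
    (f : Finset V → M) (p : α) :
    ∑ x ∈ D.region X p, (f (insert x (D.region X (D.left x))) - f (D.region X (D.left x))) =
      f (D.region X p) - f ∅ := by
  induction hn : (D.region X p).card generalizing p with
  | zero => simp [Finset.card_eq_zero.1 hn]
  | succ n ih =>
    obtain ⟨x, hx, hregion⟩ := exists_region_eq_insert hX (p := p) (Finset.card_pos.1 (by omega))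
    rw [hregion, Finset.card_insert_of_notMem hx, Nat.succ_inj] at hn
    rw [hregion, Finset.sum_insert hx, ih _ hn, sub_add_sub_cancel]

/-- The color of a chord `x` of `X` obtained from a coloring `g` of the regions cut out by `X`: the
unordered pair of the colors of the two regions on either side of `x`. -/
def borderColor (D : ChordDiagram V α) (X : Finset V) (g : Finset V → κ) (x : V) : Sym2 κ :=
  s(g (insert x (D.region X (D.left x))), g (D.region X (D.left x)))

theorem sum_pairVector_borderColor [DecidableEq κ] (hX : D.crossingGraph.IsIndepSet X)
    (g : Finset V → κ) (p : α) :
    ∑ x ∈ D.region X p, pairVector (D.borderColor X g x) =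
      pairVector s(g (D.region X p), g ∅) := by
  simp only [borderColor, pairVector_mk]
  exact sum_region_sub hX (fun R ↦ Pi.single (g R) 1) p

theorem hasOddColor_borderColor (hX : D.crossingGraph.IsIndepSet X)
    (g : ((D.chordGraph Y).map (D.region X)).Coloring κ) {y : V} (hyY : y ∈ Y)
    (hyX : D.crossingGraph.neighborSet y ⊆ X) (hne : (D.crossingGraph.neighborSet y).Nonempty) :
    HasOddColor D.crossingGraph (D.borderColor X g) y := by
  classical
  have hnbr := neighborSet_eq_symmDiff_region hyX
  have hregion : D.region X (D.left y) ≠ D.region X (D.right y) := by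
    intro heq
    rw [hnbr, heq, symmDiff_self, Finset.bot_eq_empty, Finset.coe_empty] at hne
    exact Set.not_nonempty_empty hne
  have hcolor : g (D.region X (D.left y)) ≠ g (D.region X (D.right y)) :=
    g.valid <| SimpleGraph.map_adj_apply'
      ((chordGraph_adj_of_lt (D.left_lt_right y)).2 ⟨y, hyY, rfl, rfl⟩) hregion
  have hsum : ∑ x ∈ symmDiff (D.region X (D.left y)) (D.region X (D.right y)),
      pairVector (D.borderColor X g x) ≠ 0 := by
    rw [sum_symmDiff_eq_add_of_charTwo, sum_pairVector_borderColor hX,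
      sum_pairVector_borderColor hX, ← ZModModule.sub_eq_add, pairVector_mk, pairVector_mk,
      sub_sub_sub_cancel_right, ← pairVector_mk]
    exact pairVector_mk_ne_zero hcolor
  obtain ⟨i, hi⟩ := exists_odd_card_fiber_of_sum_ne_zero hsum
  refine ⟨i, ?_⟩
  rw [hnbr]
  rwa [← Set.ncard_coe_finset, Finset.coe_filter] at hi

end DecidableEq

theorem exists_isOddColoring_of_bipartite [Finite α] (D : ChordDiagram V α)
    {side : V → Bool} (hside : ∀ u v, D.crossingGraph.Adj u v → side u ≠ side v) :
    ∃ c : V → Bool × Sym2 (Fin 9), IsOddColoring D.crossingGraph c := by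
  classical
  have := Finite.of_injective D.left D.left_injective
  have := Fintype.ofFinite V
  let X (b : Bool) : Finset V := {v | side v = b}
  let Y (b : Bool) : Set V := {v | side v = !b}
  have hindep : ∀ {S : Set V} {b : Bool}, (∀ v ∈ S, side v = b) → D.crossingGraph.IsIndepSet S :=
    fun hS u hu v hv _ huv ↦ hside u v huv ((hS u hu).trans (hS v hv).symm)
  have hX (b : Bool) : D.crossingGraph.IsIndepSet (X b) :=
    hindep (b := b) fun v hv ↦ by simpa [X] using hv
  have hY (b : Bool) : D.crossingGraph.IsIndepSet (Y b) := hindep fun v hv ↦ hv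
  have hregions (b : Bool) : ((D.chordGraph (Y b)).map (D.region (X b))).Colorable 9 :=
    (isNoncrossing_chordGraph (hY b)).colorable_map isNoncrossingLabelling_region
  let g (b : Bool) := (hregions b).some
  refine ⟨_, isOddColoring_of_sides hside (c := fun b ↦ D.borderColor (X b) (g b))
    fun v hv ↦ hasOddColor_borderColor (hX _) _ ?_ (fun u huv ↦ ?_) hv⟩
  · exact (Bool.not_not _).symm
  · simpa [X] using Bool.eq_not.2 (hside v u huv).symm

end ChordDiagram

theorem IsCircleGraph.exists_chordDiagram {V : Type} {G : SimpleGraph V} (h : IsCircleGraph G) :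
    ∃ (n : ℕ) (D : ChordDiagram V (Fin (2 * n + 1))), D.crossingGraph = G := by
  obtain ⟨n, a, b, hab, hinj, hadj⟩ := h
  have hright v : b v < 2 * n + 1 := Nat.lt_succ_of_le (hab v).2.2
  have hleft v : a v < 2 * n + 1 := (hab v).2.1.trans (hright v)
  let D : ChordDiagram V (Fin (2 * n + 1)) :=
    { left v := ⟨a v, hleft v⟩
      right v := ⟨b v, hright v⟩
      left_lt_right v := (hab v).2.1
      injective_elim := Function.Injective.of_comp (f := Fin.val) <| by
        rwa [Sum.comp_elim] }
  exact ⟨n, D, SimpleGraph.ext (funext₂ fun u v ↦ propext (hadj u v).symm)⟩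

theorem IsBipartiteGraph.exists_side {V : Type} {G : SimpleGraph V} (h : IsBipartiteGraph G) :
    ∃ side : V → Bool, ∀ u v, G.Adj u v → side u ≠ side v := by
  classical
  obtain ⟨X, hX⟩ := h
  refine ⟨fun v ↦ decide (v ∈ X), fun u v huv heq ↦ ?_⟩
  have := hX u v huv
  simp only [decide_eq_decide] at heq
  tauto

/-- Every bipartite circle graph has odd chromatic number at most 98. -/
theorem bipartite_circle_graph_odd_chromatic_le_98 {V : Type} [Fintype V]
    (G : SimpleGraph V) (hbip : IsBipartiteGraph G) (hcirc : IsCircleGraph G) :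
    ∃ c : V → Fin 98, (∀ u v : V, G.Adj u v → c u ≠ c v) ∧
      ∀ v : V, (G.neighborSet v).Nonempty →
        ∃ i : Fin 98, Odd {u | u ∈ G.neighborSet v ∧ c u = i}.ncard := by
  obtain ⟨side, hside⟩ := hbip.exists_side
  obtain ⟨n, D, rfl⟩ := hcirc.exists_chordDiagram
  obtain ⟨c, hc⟩ := D.exists_isOddColoring_of_bipartite hside
  have hcard : Fintype.card (Bool × Sym2 (Fin 9)) ≤ Fintype.card (Fin 98) := by
    simp only [Fintype.card_prod, Fintype.card_bool, Sym2.card, Fintype.card_fin]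
    decide
  obtain ⟨palette⟩ := Function.Embedding.nonempty_of_card_le hcard
  exact ⟨palette ∘ c, hc.comp_embedding palette⟩
end
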